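/- arXiv:2605.04935 — 3 statements merged into one kernel-verified Lean document; each statement's English description precedes it below -/
import Mathlib

section
/- Let p be a prime and w = (a_0,…,a_5) ∈ V_5 a nonzero element. If the catalecticant covariant Cat_{2,2}(x,y:w) is not the zero cubic form, then there exists an integer C with |C| ≤ 4 such that S(w) = C·p². -/
open Finset

/-- Multiplication of binary forms encoded by coefficient tuples: a binary form
`∑ i, f i • x^(a-i) * y^i` of degree `a` is encoded as the tuple `f : Fin (a+1) → k`,
and multiplication of forms is convolution of coefficient tuples. -/
def formMul {k : Type*} [CommRing k] {a b : ℕ} (f : Fin (a + 1) → k)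
    (g : Fin (b + 1) → k) : Fin (a + b + 1) → k :=
  fun i => ∑ q : Fin (a + 1) × Fin (b + 1),
    if (q.1 : ℕ) + (q.2 : ℕ) = (i : ℕ) then f q.1 * g q.2 else 0

/-- The pairing `(w, v) = ∑ i, w i * v i` between `V_n` and `V_n^*`. -/
def pair {k : Type*} [CommRing k] {n : ℕ} (w v : Fin (n + 1) → k) : k :=
  ∑ i, w i * v i

/-- A binary quintic form is singular if it is nonzero and, over an algebraic closure,
it is divisible by the square of a nonzero linear form. -/
def IsSingularQuintic {k : Type*} [Field k] (v : Fin 6 → k) : Prop :=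
  v ≠ 0 ∧ ∃ (l : Fin 2 → AlgebraicClosure k) (c : Fin 4 → AlgebraicClosure k),
    l ≠ 0 ∧
    (fun i => algebraMap k (AlgebraicClosure k) (v i)) = formMul (formMul l l) c

open scoped Classical in
/-- The exponential sum `S(w)` over binary quintic forms that are zero or singular. -/
noncomputable def expSum (p : ℕ) [Fact p.Prime] (w : Fin 6 → ZMod p) : ℂ :=
  ∑ v : Fin 6 → ZMod p,
    if v = 0 ∨ IsSingularQuintic v then
      Complex.exp (2 * Real.pi * Complex.I * ((pair w v).val : ℂ) / (p : ℂ))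
    else 0

/-- The catalecticant covariant `Cat_{2,2}(x,y:w) = det (x•A₁ - y•A₀)`, a binary cubic
form, regarded as a polynomial in the two variables `x = X 0` and `y = X 1`. -/
noncomputable def cat22 {k : Type*} [CommRing k] (w : Fin 6 → k) :
    MvPolynomial (Fin 2) k :=
  Matrix.det (Matrix.of fun i j : Fin 3 =>
    MvPolynomial.X 0 * MvPolynomial.C (w ⟨(i : ℕ) + (j : ℕ) + 1, by omega⟩) -
    MvPolynomial.X 1 * MvPolynomial.C (w ⟨(i : ℕ) + (j : ℕ), by omega⟩))

/-
A quintic form `v` over a finite field with `q` elements is zero or singular exactly when it is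
divisible by the square of a linear or quadratic form. Möbius inversion over these squares writes
the indicator of that condition as the number of points `z` of the projective line with `z² ∣ v`
minus a sum over the points `Q` of the projective plane of quadratic forms with `Q² ∣ v`, weighted
by the number of distinct linear factors of `Q` minus one. The Fourier transform of the space of
multiples of `d²` is supported on the `w` that are apolar to `d²`. For `d` linear such a `w` has
vanishing catalecticant covariant. For `d` quadratic, apolarity says that `d` lies on the two conics
`uᵀ A₀ u = 0` and `uᵀ A₁ u = 0`, and each such point contributes `± q²` or `0`. In odd
characteristic five common points would make the pencil of conics degenerate, so there are at most
four of them. In characteristic two the conics are double lines, and along a common line the weights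
cancel because its points have one linear factor on average.
-/

section Divisibility

open Polynomial

section CommRing

variable {k : Type*} [CommRing k] {a b n : ℕ}

/-- The dehomogenization `v(1, X)` of the binary form `v(x, y) = ∑ i, v i * x ^ (n - i) * y ^ i`. It
turns forms into polynomials at the price of losing the multiplicity of the factor `x`, which is the
amount by which the degree drops. -/
noncomputable def dehomogenize (v : Fin (n + 1) → k) : k[X] := ∑ i, C (v i) * X ^ (i : ℕ)

/-- Divisibility of binary forms, of arbitrary degrees `a` and `n`: the quotient is a form of degree
`n - a`, encoded by its dehomogenization. -/
def FormDvd (d : Fin (a + 1) → k) (v : Fin (n + 1) → k) : Prop :=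
  ∃ g : k[X], g.natDegree + a ≤ n ∧ dehomogenize v = dehomogenize d * g

lemma coeff_dehomogenize (v : Fin (n + 1) → k) (i : Fin (n + 1)) :
    (dehomogenize v).coeff i = v i := by
  simp [dehomogenize, coeff_X_pow, Fin.val_inj]

lemma natDegree_dehomogenize_le (v : Fin (n + 1) → k) : (dehomogenize v).natDegree ≤ n :=
  natDegree_sum_le_of_forall_le _ _ fun i _ =>
    (natDegree_C_mul_X_pow_le _ _).trans (Nat.le_of_lt_succ i.isLt)

lemma dehomogenize_injective :
    Function.Injective (dehomogenize : (Fin (n + 1) → k) → k[X]) := fun v w h => by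
  ext i
  rw [← coeff_dehomogenize v, h, coeff_dehomogenize]

lemma exists_dehomogenize_eq {f : k[X]} (hf : f.natDegree ≤ n) :
    ∃ v : Fin (n + 1) → k, dehomogenize v = f := by
  refine ⟨fun i => f.coeff i, ?_⟩
  rw [dehomogenize, Fin.sum_univ_eq_sum_range (fun i => C (f.coeff i) * X ^ i) (n + 1),
    ← as_sum_range_C_mul_X_pow' f (Nat.lt_succ_of_le hf)]

lemma dehomogenize_formMul (f : Fin (a + 1) → k) (g : Fin (b + 1) → k) :
    dehomogenize (formMul f g) = dehomogenize f * dehomogenize g := by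
  rw [dehomogenize, dehomogenize, dehomogenize, Fintype.sum_mul_sum, ← Fintype.sum_prod_type']
  simp only [formMul, map_sum, Finset.sum_mul]
  rw [Finset.sum_comm]
  refine Finset.sum_congr rfl fun q _ => ?_
  rw [Finset.sum_eq_single (⟨q.1 + q.2, by omega⟩ : Fin (a + b + 1))]
  · simp only [if_true, C_mul, pow_add]
    ring
  · intro i _ hi
    rw [if_neg fun h => hi (Fin.ext h.symm), C_0, zero_mul]
  · simp

lemma dehomogenize_map {K : Type*} [CommRing K] (φ : k →+* K) (v : Fin (n + 1) → k) :
    dehomogenize (fun i => φ (v i)) = (dehomogenize v).map φ := by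
  simp [dehomogenize, Polynomial.map_sum]

lemma dehomogenize_smul (c : k) (v : Fin (n + 1) → k) :
    dehomogenize (c • v) = dehomogenize v * C c := by
  simp [dehomogenize, Finset.sum_mul, mul_right_comm _ _ (C c), mul_comm (C c)]

lemma dehomogenize_zero : dehomogenize (0 : Fin (n + 1) → k) = 0 := by
  simp [dehomogenize]

lemma dehomogenize_eq_zero_iff {v : Fin (n + 1) → k} : dehomogenize v = 0 ↔ v = 0 := by
  rw [← dehomogenize_zero (n := n), dehomogenize_injective.eq_iff]

lemma formDvd_iff_exists_eq_formMul {d : Fin (a + 1) → k} {v : Fin (a + b + 1) → k} :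
    FormDvd d v ↔ ∃ c : Fin (b + 1) → k, v = formMul d c := by
  constructor
  · rintro ⟨g, hg, hv⟩
    obtain ⟨c, rfl⟩ := exists_dehomogenize_eq (n := b) (f := g) (by omega)
    exact ⟨c, dehomogenize_injective (by rw [hv, dehomogenize_formMul])⟩
  · rintro ⟨c, rfl⟩
    exact ⟨dehomogenize c, by linarith [natDegree_dehomogenize_le c], dehomogenize_formMul d c⟩

lemma formDvd_iff_exists_smul_eq {d e : Fin (a + 1) → k} : FormDvd d e ↔ ∃ c : k, c • d = e := by
  constructor
  · rintro ⟨g, hg, he⟩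
    rw [eq_C_of_natDegree_le_zero (p := g) (by omega), ← dehomogenize_smul] at he
    exact ⟨_, (dehomogenize_injective he).symm⟩
  · rintro ⟨c, rfl⟩
    exact ⟨C c, by simp, dehomogenize_smul c d⟩

lemma FormDvd.refl (d : Fin (a + 1) → k) : FormDvd d d :=
  ⟨1, by simp, by simp⟩

lemma FormDvd.trans {d : Fin (a + 1) → k} {e : Fin (b + 1) → k} {v : Fin (n + 1) → k}
    (hde : FormDvd d e) (hev : FormDvd e v) : FormDvd d v := by
  obtain ⟨g, hg, he⟩ := hde
  obtain ⟨h, hh, hv⟩ := hev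
  exact ⟨g * h, by linarith [natDegree_mul_le (p := g) (q := h)], by rw [hv, he, mul_assoc]⟩

lemma FormDvd.degree_le {d : Fin (a + 1) → k} {v : Fin (n + 1) → k} (h : FormDvd d v) : a ≤ n :=
  (Nat.le_add_left _ _).trans h.choose_spec.1

lemma formDvd_zero {d : Fin (a + 1) → k} (h : a ≤ n) : FormDvd d (0 : Fin (n + 1) → k) :=
  ⟨0, by simpa using h, by rw [dehomogenize_zero, mul_zero]⟩

variable [IsDomain k]

lemma formDvd_iff_of_ne_zero {d : Fin (a + 1) → k} {v : Fin (n + 1) → k} (hv : v ≠ 0) :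
    FormDvd d v ↔ dehomogenize d ∣ dehomogenize v ∧
      (dehomogenize v).natDegree + a ≤ (dehomogenize d).natDegree + n := by
  have degree_quotient {g : k[X]} (hg : dehomogenize v = dehomogenize d * g) :
      (dehomogenize v).natDegree = (dehomogenize d).natDegree + g.natDegree := by
    have hne : dehomogenize d * g ≠ 0 := hg ▸ dehomogenize_eq_zero_iff.not.mpr hv
    rw [hg, natDegree_mul (left_ne_zero_of_mul hne) (right_ne_zero_of_mul hne)]
  constructor
  · rintro ⟨g, hdeg, hg⟩
    exact ⟨⟨g, hg⟩, by linarith [degree_quotient hg]⟩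
  · rintro ⟨⟨g, hg⟩, hdeg⟩
    exact ⟨g, by linarith [degree_quotient hg], hg⟩

lemma formMul_ne_zero {f : Fin (a + 1) → k} {g : Fin (b + 1) → k} (hf : f ≠ 0) (hg : g ≠ 0) :
    formMul f g ≠ 0 := by
  rw [ne_eq, ← dehomogenize_eq_zero_iff] at hf hg ⊢
  rw [dehomogenize_formMul]
  exact mul_ne_zero hf hg

lemma formMul_right_injective {d : Fin (a + 1) → k} (hd : d ≠ 0) :
    Function.Injective (formMul d : (Fin (b + 1) → k) → _) := fun c c' h => by
  refine dehomogenize_injective (mul_left_cancel₀ (dehomogenize_eq_zero_iff.not.mpr hd) ?_)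
  rw [← dehomogenize_formMul, h, dehomogenize_formMul]

end CommRing

section SquarePart

lemma exists_forall_mul_self_dvd_iff {M : Type*} [CommMonoidWithZero M]
    [UniqueFactorizationMonoid M] {f : M} (hf : f ≠ 0) : ∃ e : M, ∀ d, d * d ∣ f ↔ d ∣ e := by
  induction f using (wellFounded_dvdNotUnit (α := M)).induction with | _ f ih
  by_cases hsq : Squarefree f
  · exact ⟨1, fun d => ⟨fun h => (hsq d h).dvd, fun h => by
      have hd := isUnit_of_dvd_one h
      exact (hd.mul hd).dvd⟩⟩
  obtain ⟨p, hp, q, rfl⟩ : ∃ p, Irreducible p ∧ p * p ∣ f := by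
    simpa [squarefree_iff_no_irreducibles hf] using hsq
  have hpq : DvdNotUnit q (p * p * q) :=
    ⟨right_ne_zero_of_mul hf, p * p, not_isUnit_of_not_isUnit_dvd hp.not_isUnit (dvd_mul_left p p),
      mul_comm _ _⟩
  obtain ⟨e, he⟩ := ih q hpq (right_ne_zero_of_mul hf)
  refine ⟨p * e, fun d => ?_⟩
  by_cases hpd : p ∣ d
  · obtain ⟨d, rfl⟩ := hpd
    rw [mul_mul_mul_comm, mul_dvd_mul_iff_left (mul_ne_zero hp.ne_zero hp.ne_zero), he,
      mul_dvd_mul_iff_left hp.ne_zero]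
  · have hrel : IsRelPrime d p := (hp.isRelPrime_iff_not_dvd.mpr hpd).symm
    have hrel2 : IsRelPrime (d * d) (p * p) := (hrel.mul_left hrel).mul_right (hrel.mul_left hrel)
    calc d * d ∣ p * p * q ↔ d * d ∣ q :=
          ⟨hrel2.dvd_of_dvd_mul_left, fun h => h.mul_left _⟩
      _ ↔ d ∣ e := he d
      _ ↔ d ∣ p * e := ⟨fun h => h.mul_left _, hrel.dvd_of_dvd_mul_left⟩

variable {k : Type*} [Field k] {n : ℕ}

/-- The square part of a binary form: the degree drop, which is the multiplicity of the factor `x`,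
is halved along with the multiplicities of the other factors. -/
lemma exists_forall_formMul_self_formDvd_iff {v : Fin (n + 1) → k} (hv : v ≠ 0) :
    ∃ (a : ℕ) (e : Fin (a + 1) → k), e ≠ 0 ∧
      ∀ (b : ℕ) (d : Fin (b + 1) → k), FormDvd (formMul d d) v ↔ FormDvd d e := by
  have hf : dehomogenize v ≠ 0 := dehomogenize_eq_zero_iff.not.mpr hv
  obtain ⟨r, hr⟩ := exists_forall_mul_self_dvd_iff hf
  have hr0 : r ≠ 0 := fun h => hf (by simpa [h] using hr 0)
  obtain ⟨e, he⟩ := exists_dehomogenize_eq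
    (Nat.le_add_right r.natDegree ((n - (dehomogenize v).natDegree) / 2))
  have he0 : e ≠ 0 := dehomogenize_eq_zero_iff.not.mp (by rwa [he])
  refine ⟨_, e, he0, fun b d => ?_⟩
  rw [formDvd_iff_of_ne_zero hv, formDvd_iff_of_ne_zero he0, dehomogenize_formMul, hr, he]
  refine and_congr_right fun hde => ?_
  have hd : dehomogenize d ≠ 0 := ne_zero_of_dvd_ne_zero hr0 hde
  have hdeg := natDegree_dehomogenize_le v
  rw [natDegree_mul hd hd]
  omega

end SquarePart

end Divisibility

section Singular

open Polynomial

section CommRing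

variable {k : Type*} [CommRing k] {a n : ℕ}

lemma dehomogenize_linear (l : Fin 2 → k) : dehomogenize l = C (l 1) * X + C (l 0) := by
  simp [dehomogenize, Fin.sum_univ_two, add_comm]

lemma FormDvd.map {K : Type*} [CommRing K] (φ : k →+* K) {d : Fin (a + 1) → k}
    {v : Fin (n + 1) → k} (h : FormDvd d v) :
    FormDvd (fun i => φ (d i)) fun i => φ (v i) := by
  obtain ⟨g, hg, hv⟩ := h
  refine ⟨g.map φ, (Nat.add_le_add_right natDegree_map_le a).trans hg, ?_⟩
  rw [dehomogenize_map, dehomogenize_map, hv, Polynomial.map_mul]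

lemma FormDvd.formMul_self {d : Fin (a + 1) → k} {v : Fin (n + 1) → k} (h : FormDvd d v) :
    FormDvd (formMul d d) (formMul v v) := by
  obtain ⟨g, hg, hv⟩ := h
  exact ⟨g * g, by linarith [natDegree_mul_le (p := g) (q := g)],
    by rw [dehomogenize_formMul, dehomogenize_formMul, hv, mul_mul_mul_comm]⟩

lemma map_formMul {K : Type*} [CommRing K] (φ : k →+* K) {b : ℕ} (f : Fin (a + 1) → k)
    (g : Fin (b + 1) → k) :
    (fun i => φ (formMul f g i)) = formMul (fun i => φ (f i)) fun i => φ (g i) :=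
  dehomogenize_injective (by simp only [dehomogenize_map, dehomogenize_formMul,
    Polynomial.map_mul])

end CommRing

variable {K : Type*} [Field K]

lemma exists_linear_formDvd [IsAlgClosed K] {n : ℕ} (hn : 0 < n) (v : Fin (n + 1) → K) :
    ∃ l : Fin 2 → K, l ≠ 0 ∧ FormDvd l v := by
  by_cases hdeg : (dehomogenize v).natDegree < n
  · exact ⟨![1, 0], fun h => by simpa using congrFun h 0, dehomogenize v, hdeg,
      by simp [dehomogenize_linear]⟩
  · obtain ⟨α, hα⟩ := IsAlgClosed.exists_root (dehomogenize v)
      (degree_ne_of_natDegree_ne (n := 0) (by omega))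
    obtain ⟨g, hg⟩ := dvd_iff_isRoot.mpr hα
    have hl : dehomogenize ![-α, 1] = X - C α := by simp [dehomogenize_linear, sub_eq_add_neg]
    have hv : v ≠ 0 := by
      rintro rfl
      simp [dehomogenize_zero, hn] at hdeg
    refine ⟨![-α, 1], fun h => by simpa using congrFun h 1, (formDvd_iff_of_ne_zero hv).mpr ?_⟩
    rw [hl, natDegree_X_sub_C]
    exact ⟨⟨g, hg⟩, by linarith [natDegree_dehomogenize_le v]⟩

lemma exists_pos_formMul_self_formDvd_of_not_squarefree {n : ℕ} {v : Fin (n + 1) → K}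
    (hv : v ≠ 0) (hsq : ¬ Squarefree (dehomogenize v)) :
    ∃ b > 0, ∃ d : Fin (b + 1) → K, FormDvd (formMul d d) v := by
  obtain ⟨g, hg, hgu⟩ : ∃ g, g * g ∣ dehomogenize v ∧ ¬ IsUnit g := by
    simpa [Squarefree] using hsq
  obtain ⟨d, hd⟩ := exists_dehomogenize_eq (f := g) le_rfl
  have hg0 : g ≠ 0 := by
    rintro rfl
    exact hv (dehomogenize_eq_zero_iff.mp (by simpa using hg))
  have hgdeg : 0 < g.natDegree :=
    natDegree_pos_iff_degree_pos.mpr (degree_pos_of_ne_zero_of_nonunit hg0 hgu)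
  refine ⟨g.natDegree, hgdeg, d, ?_⟩
  rw [formDvd_iff_of_ne_zero hv, dehomogenize_formMul, hd, natDegree_mul hg0 hg0]
  exact ⟨hg, by linarith [natDegree_dehomogenize_le v]⟩

lemma exists_linear_formMul_self_formDvd_map_iff {k : Type*} [Field k] [PerfectField k]
    [IsAlgClosed K] (φ : k →+* K) {n : ℕ} {v : Fin (n + 1) → k} (hv : v ≠ 0) :
    (∃ l : Fin 2 → K, l ≠ 0 ∧ FormDvd (formMul l l) fun i => φ (v i)) ↔
      ∃ b > 0, ∃ d : Fin (b + 1) → k, FormDvd (formMul d d) v := by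
  constructor
  · rintro ⟨l, -, h⟩
    have hφv : (fun i => φ (v i)) ≠ 0 := fun h =>
      hv (funext fun i => by simpa using congrFun h i)
    rw [formDvd_iff_of_ne_zero hφv, dehomogenize_map, natDegree_map, dehomogenize_formMul] at h
    by_cases hl1 : l 1 = 0
    · have hl0 : (dehomogenize l).natDegree = 0 := by simp [dehomogenize_linear, hl1]
      have hdrop : (dehomogenize v).natDegree + 2 ≤ n := by
        linarith [natDegree_mul_le (p := dehomogenize l) (q := dehomogenize l)]
      exact ⟨1, one_pos, ![1, 0], dehomogenize v, hdrop,
        by simp [dehomogenize_formMul, dehomogenize_linear]⟩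
    · refine exists_pos_formMul_self_formDvd_of_not_squarefree hv fun hsq => ?_
      have hsep := (PerfectField.separable_iff_squarefree.mpr hsq).map (f := φ)
      have hdeg := natDegree_eq_zero_of_isUnit (hsep.squarefree _ h.1)
      rw [dehomogenize_linear, natDegree_linear hl1] at hdeg
      exact one_ne_zero hdeg
  · rintro ⟨b, hb, d, hd⟩
    obtain ⟨l, hl, hld⟩ := exists_linear_formDvd hb fun i => φ (d i)
    refine ⟨l, hl, hld.formMul_self.trans ?_⟩
    rw [← map_formMul]
    exact hd.map φ

lemma eq_zero_or_isSingularQuintic_iff [PerfectField K] {v : Fin 6 → K} :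
    v = 0 ∨ IsSingularQuintic v ↔
      ∃ b > 0, ∃ d : Fin (b + 1) → K, FormDvd (formMul d d) v := by
  by_cases hv : v = 0
  · exact iff_of_true (Or.inl hv) ⟨1, one_pos, 0, hv ▸ formDvd_zero (by simp)⟩
  rw [← exists_linear_formMul_self_formDvd_map_iff (algebraMap K (AlgebraicClosure K)) hv]
  simp only [IsSingularQuintic, hv, false_or, ne_eq, not_false_eq_true, true_and,
    exists_and_left]
  exact exists_congr fun l => and_congr_right fun _ =>
    (formDvd_iff_exists_eq_formMul (a := 1 + 1) (b := 3)).symm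

end Singular

section Projective

open Projectivization
open scoped LinearAlgebra.Projectivization

variable {k : Type*} [Field k]

lemma formDvd_rep_iff {a : ℕ} {e : Fin (a + 1) → k} (he : e ≠ 0) (z : ℙ k (Fin (a + 1) → k)) :
    FormDvd z.rep e ↔ z = mk k e he := by
  rw [formDvd_iff_exists_smul_eq, ← mk_eq_mk_iff' k e z.rep he z.rep_nonzero, mk_rep, eq_comm]

lemma formDvd_mk_rep_iff {a n : ℕ} {d : Fin (a + 1) → k} {e : Fin (n + 1) → k} (he : e ≠ 0) :
    FormDvd d (mk k e he).rep ↔ FormDvd d e := by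
  have hrep : FormDvd (mk k e he).rep e := (formDvd_rep_iff he _).mpr rfl
  have hrep' : FormDvd e (mk k e he).rep := by
    obtain ⟨c, hc⟩ := (mk_eq_mk_iff' k _ e (rep_nonzero _) he).mp (mk_rep (mk k e he))
    exact formDvd_iff_exists_smul_eq.mpr ⟨c, hc⟩
  exact ⟨fun h => h.trans hrep, fun h => h.trans hrep'⟩

section LinearFactors

lemma formMul_linear_linear {R : Type*} [CommRing R] (l m : Fin 2 → R) :
    formMul l m = ![l 0 * m 0, l 0 * m 1 + l 1 * m 0, l 1 * m 1] := by
  ext i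
  fin_cases i <;> simp [formMul, Fintype.sum_prod_type, Fin.sum_univ_two]

open Matrix

lemma linear_formDvd_quadratic_iff {l : Fin 2 → k} (hl : l ≠ 0) (d : Fin 3 → k) :
    FormDvd l d ↔ d ⬝ᵥ ![l 1 ^ 2, -(l 0 * l 1), l 0 ^ 2] = 0 := by
  have hdvd : FormDvd l d ↔ ∃ m : Fin 2 → k, d = formMul l m :=
    formDvd_iff_exists_eq_formMul (a := 1) (b := 1)
  rw [hdvd]
  constructor
  · rintro ⟨m, rfl⟩
    rw [formMul_linear_linear, vec3_dotProduct]
    simp only [Matrix.cons_val]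
    ring
  · intro h
    simp only [vec3_dotProduct, Matrix.cons_val] at h
    have hl' : l 0 ≠ 0 ∨ l 1 ≠ 0 := by
      by_contra! h0
      exact hl (funext (Fin.forall_fin_two.mpr h0))
    rcases hl' with h0 | h1
    · refine ⟨![d 0 / l 0, (d 1 - l 1 * (d 0 / l 0)) / l 0], ?_⟩
      ext i
      fin_cases i <;> simp [formMul_linear_linear] <;> grind
    · refine ⟨![(d 1 - l 0 * (d 2 / l 1)) / l 1, d 2 / l 1], ?_⟩
      ext i
      fin_cases i <;> simp [formMul_linear_linear] <;> grind

/-- The line in the projective plane of binary quadratic forms that consists of the multiples of the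
linear form `z`, in coordinates of the dual plane. -/
noncomputable def multiplesLine (z : ℙ k (Fin 2 → k)) : ℙ k (Fin 3 → k) :=
  mk k ![z.rep 1 ^ 2, -(z.rep 0 * z.rep 1), z.rep 0 ^ 2] fun h => z.rep_nonzero <| by
    ext i
    fin_cases i
    · simpa using congrFun h 2
    · simpa using congrFun h 0

lemma orthogonal_multiplesLine_iff {z : ℙ k (Fin 2 → k)} {Q : ℙ k (Fin 3 → k)} :
    Q.orthogonal (multiplesLine z) ↔ FormDvd z.rep Q.rep := by
  rw [linear_formDvd_quadratic_iff z.rep_nonzero, multiplesLine]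
  conv_lhs => rw [← Q.mk_rep]
  rw [orthogonal_mk]

/-- The number of linear factors of a binary form over the base field, up to scaling and without
multiplicity. -/
noncomputable def numLinearFactors {n : ℕ} (v : Fin (n + 1) → k) : ℕ :=
  Nat.card {z : ℙ k (Fin 2 → k) // FormDvd z.rep v}

lemma rep_zero_mul_rep_one_ne {z z' : ℙ k (Fin 2 → k)} (h : z ≠ z') :
    z.rep 0 * z'.rep 1 ≠ z.rep 1 * z'.rep 0 := by
  have hind := independent_iff.mp ((independent_pair_iff_ne z z').mpr h)
  have hdet := (isUnit_iff_isUnit_det _).mp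
    (linearIndependent_rows_iff_isUnit (A := of (Projectivization.rep ∘ ![z, z'])).mp hind)
  rw [det_fin_two] at hdet
  simpa [sub_eq_zero] using hdet.ne_zero

lemma numLinearFactors_le_two [Finite k] {d : Fin 3 → k} (hd : d ≠ 0) :
    numLinearFactors d ≤ 2 := by
  have := Fintype.ofFinite {z : ℙ k (Fin 2 → k) // FormDvd z.rep d}
  rw [numLinearFactors, Nat.card_eq_fintype_card]
  by_contra! hcard
  obtain ⟨z⟩ := Function.Embedding.nonempty_of_card_le (α := Fin 3)
    (by simpa using Nat.succ_le_of_lt hcard)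
  let V := projVandermonde (fun i => -(z i).1.rep 0) fun i => (z i).1.rep 1
  have hV : V *ᵥ d = 0 := by
    ext i
    have hroot := (linear_formDvd_quadratic_iff (z i).1.rep_nonzero d).mp (z i).2
    rw [mulVec, dotProduct_comm, Pi.zero_apply, ← hroot]
    congr 1
    ext j
    fin_cases j <;> simp [V, projVandermonde_apply, Fin.rev]
  have hdet : V.det ≠ 0 := by
    simp only [V, det_projVandermonde, Finset.prod_ne_zero_iff]
    intro i _ j hj hij
    have hne := rep_zero_mul_rep_one_ne fun h =>
      (Finset.mem_Ioi.mp hj).ne (z.injective (Subtype.ext h))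
    exact hne (by linear_combination hij)
  exact hd (eq_zero_of_mulVec_eq_zero hdet hV)

end LinearFactors

end Projective

section Plane

open Projectivization Configuration
open scoped LinearAlgebra.Projectivization

variable {k : Type*} [Field k] [Fintype (ℙ k (Fin 3 → k))]

lemma card_projectivePlane [Finite k] :
    Fintype.card (ℙ k (Fin 3 → k)) = Nat.card k ^ 2 + Nat.card k + 1 := by
  rw [← Nat.card_eq_fintype_card, card_of_finrank k (Fin 3 → k) (Module.finrank_fin_fun k)]
  simp only [sum_range_succ, sum_range_zero]
  ring

open scoped Classical in
lemma card_orthogonal [Finite k] (u : ℙ k (Fin 3 → k)) :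
    #{Q : ℙ k (Fin 3 → k) | Q.orthogonal u} = Nat.card k + 1 := by
  set q := ProjectivePlane.order (ℙ k (Fin 3 → k)) (ℙ k (Fin 3 → k))
  have hline : #{Q : ℙ k (Fin 3 → k) | Q.orthogonal u} = q + 1 := by
    rw [← ProjectivePlane.pointCount_eq _ u, pointCount, Nat.card_eq_fintype_card,
      Fintype.card_subtype]
    rfl
  have hplane : q ^ 2 + q + 1 = Nat.card k ^ 2 + Nat.card k + 1 := by
    rw [← ProjectivePlane.card_points, card_projectivePlane]
  rw [hline]
  nlinarith

open scoped Classical in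
lemma card_orthogonal_inter {u u' : ℙ k (Fin 3 → k)} (h : u ≠ u') :
    #{Q : ℙ k (Fin 3 → k) | Q.orthogonal u ∧ Q.orthogonal u'} = 1 := by
  obtain ⟨Q, hQ, huniq⟩ := HasPoints.existsUnique_point (ℙ k (Fin 3 → k)) _ u u' h
  rw [card_eq_one]
  refine ⟨Q, eq_singleton_iff_unique_mem.mpr ⟨?_, fun R hR => ?_⟩⟩
  · exact mem_filter.mpr ⟨mem_univ _, hQ⟩
  · exact huniq R (mem_filter.mp hR).2

end Plane

section Incidence

open Projectivization
open scoped LinearAlgebra.Projectivization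

variable {k : Type*} [Field k] [Fintype (ℙ k (Fin 2 → k))]

lemma card_projectiveLine [Finite k] : Fintype.card (ℙ k (Fin 2 → k)) = Nat.card k + 1 := by
  rw [← Nat.card_eq_fintype_card, card_of_finrank_two k _ (Module.finrank_fin_fun k)]

open scoped Classical in
lemma sum_numLinearFactors (s : Finset (ℙ k (Fin 3 → k))) :
    ∑ Q ∈ s, numLinearFactors Q.rep =
      ∑ z : ℙ k (Fin 2 → k), #{Q ∈ s | Q.orthogonal (multiplesLine z)} := by
  simp only [numLinearFactors, Nat.card_eq_fintype_card, Fintype.card_subtype,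
    orthogonal_multiplesLine_iff]
  exact sum_card_bipartiteAbove_eq_sum_card_bipartiteBelow _

end Incidence

section Sieve

open Projectivization
open scoped LinearAlgebra.Projectivization

variable {k : Type*} [Field k] [Finite k] [Fintype (ℙ k (Fin 3 → k))]

lemma sum_univ_numLinearFactors_sub_one :
    ∑ Q : ℙ k (Fin 3 → k), ((numLinearFactors Q.rep : ℤ) - 1) = Nat.card k := by
  classical
  have := Fintype.ofFinite (ℙ k (Fin 2 → k))
  have hcount : ∑ Q : ℙ k (Fin 3 → k), numLinearFactors Q.rep = (Nat.card k + 1) ^ 2 := by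
    rw [sum_numLinearFactors, sum_congr rfl fun z _ => card_orthogonal (multiplesLine z)]
    simp [card_projectiveLine, sq]
  rw [sum_sub_distrib, ← Nat.cast_sum, hcount]
  simp only [sum_const, card_univ, card_projectivePlane]
  push_cast
  ring

variable [Fintype (ℙ k (Fin 2 → k))]

open scoped Classical in
/-- The weights are values of the Möbius function, which is `-1` on linear forms and `N - 1` on
quadratic forms with `N` linear factors. -/
lemma indicator_eq_zero_or_isSingularQuintic (v : Fin 6 → k) :
    (if v = 0 ∨ IsSingularQuintic v then (1 : ℤ) else 0) =
      #{z : ℙ k (Fin 2 → k) | FormDvd (formMul z.rep z.rep) v} -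
        ∑ Q : ℙ k (Fin 3 → k) with FormDvd (formMul Q.rep Q.rep) v,
          ((numLinearFactors Q.rep : ℤ) - 1) := by
  by_cases hv : v = 0
  · have hdvd {a : ℕ} (d : Fin (a + 1) → k) (ha : a + a ≤ 5) : FormDvd (formMul d d) v :=
      hv ▸ formDvd_zero ha
    rw [if_pos (Or.inl hv), filter_true_of_mem fun z _ => hdvd _ (by norm_num),
      filter_true_of_mem fun Q _ => hdvd _ (by norm_num), card_univ, card_projectiveLine,
      sum_univ_numLinearFactors_sub_one]
    simp
  obtain ⟨a, e, he, hdvd⟩ := exists_forall_formMul_self_formDvd_iff hv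
  have ha : a + a ≤ 5 := ((hdvd a e).mpr (.refl e)).degree_le
  have hlow {b : ℕ} (d : Fin (b + 1) → k) (hab : a < b) : ¬ FormDvd d e :=
    fun h => hab.not_ge h.degree_le
  have hunit : (∃ b > 0, ∃ d : Fin (b + 1) → k, FormDvd d e) ↔ 0 < a :=
    ⟨fun ⟨b, hb, d, hd⟩ => hb.trans_le hd.degree_le, fun h => ⟨a, h, e, .refl e⟩⟩
  simp only [eq_zero_or_isSingularQuintic_iff, hdvd, hunit]
  obtain rfl | rfl | rfl : a = 0 ∨ a = 1 ∨ a = 2 := by omega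
  · simp [hlow]
  · have hself : ({z | FormDvd z.rep e} : Finset (ℙ k (Fin 2 → k))) = {mk k e he} := by
      ext z
      simpa using formDvd_rep_iff he z
    simp [hlow, hself]
  · have hself : ({Q | FormDvd Q.rep e} : Finset (ℙ k (Fin 3 → k))) = {mk k e he} := by
      ext Q
      simpa using formDvd_rep_iff he Q
    rw [hself, sum_singleton, numLinearFactors, Nat.card_eq_fintype_card, Fintype.card_subtype]
    simp [formDvd_mk_rep_iff]

end Sieve

section Conics

variable {k V : Type*} [Field k] [AddCommGroup V] [Module k V] {B : LinearMap.BilinForm k V}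

lemma apply_eq_zero_of_collinear (h2 : (2 : k) ≠ 0) (hB : B.IsSymm) {u v w : V}
    (huw : LinearIndependent k ![u, w]) (hvw : LinearIndependent k ![v, w])
    (hw : w ∈ Submodule.span k {u, v}) (huu : B u u = 0) (hvv : B v v = 0) (hww : B w w = 0) :
    B u v = 0 := by
  obtain ⟨x, y, rfl⟩ := Submodule.mem_span_pair.mp hw
  have hx : x ≠ 0 := by
    rintro rfl
    have := (LinearIndependent.pair_iff.mp hvw y (-1) (by module)).2
    simp at this
  have hy : y ≠ 0 := by
    rintro rfl
    have := (LinearIndependent.pair_iff.mp huw x (-1) (by module)).2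
    simp at this
  have hexpand : 2 * (x * y) * B u v = 0 := by
    simp only [map_add, map_smul, LinearMap.add_apply, LinearMap.smul_apply, smul_eq_mul, huu,
      hvv, hB.eq v u] at hww
    linear_combination hww
  simpa [h2, hx, hy] using hexpand

lemma apply_eq_zero_of_mem_span_triple (h2 : (2 : k) ≠ 0) (hB : B.IsSymm) {u v w p : V}
    (hp : p ∈ Submodule.span k {u, v, w}) (hp' : p ∉ Submodule.span k {u, v}) (huu : B u u = 0)
    (hvv : B v v = 0) (huv : B u v = 0) (hww : B w w = 0) (hpp : B p p = 0) : B w p = 0 := by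
  obtain ⟨x, y, z, rfl⟩ := Submodule.mem_span_triple.mp hp
  have hz : z ≠ 0 := by
    rintro rfl
    exact hp' (Submodule.mem_span_pair.mpr ⟨x, y, by module⟩)
  simp only [map_add, map_smul, LinearMap.add_apply, LinearMap.smul_apply, smul_eq_mul, huu, hvv,
    huv, hww, hB.eq v u, hB.eq w u, hB.eq w v] at hpp ⊢
  have hexpand : 2 * z * (x * B u w + y * B v w) = 0 := by linear_combination hpp
  have := (mul_eq_zero_iff_left (mul_ne_zero h2 hz)).mp hexpand
  linear_combination this

lemma eq_zero_of_general_position (h2 : (2 : k) ≠ 0) (hB : B.IsSymm) (hV : Module.finrank k V = 3)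
    {d : Fin 5 → V} (hd : ∀ i j l, i ≠ j → i ≠ l → j ≠ l → LinearIndependent k ![d i, d j, d l])
    (hBd : ∀ i, B (d i) (d i) = 0) (h01 : B (d 0) (d 1) = 0) : B = 0 := by
  have hspan {i j l : Fin 5} (hij : i ≠ j) (hil : i ≠ l) (hjl : j ≠ l) :
      Submodule.span k {d i, d j, d l} = ⊤ := by
    have := (hd i j l hij hil hjl).span_eq_top_of_card_eq_finrank (by simp [hV])
    simpa only [Matrix.range_cons, Matrix.range_empty, Set.union_empty, Set.singleton_union]
      using this
  have hnot {i : Fin 5} (hi0 : i ≠ 0) (hi1 : i ≠ 1) : d i ∉ Submodule.span k {d 0, d 1} := by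
    have := (linearIndependent_finCons.mp (hd i 0 1 hi0 hi1 zero_ne_one)).2
    simpa only [Matrix.range_cons, Matrix.range_empty, Set.union_empty, Set.singleton_union]
      using this
  have h2i (i : Fin 5) (hi0 : i ≠ 0) (hi1 : i ≠ 1) : B (d 2) (d i) = 0 :=
    apply_eq_zero_of_mem_span_triple h2 hB
      (hspan (i := 0) (j := 1) (l := 2) (by decide) (by decide) (by decide) ▸ Submodule.mem_top)
      (hnot hi0 hi1) (hBd 0) (hBd 1) h01 (hBd 2) (hBd i)
  have hker : B (d 2) = 0 :=
    LinearMap.ext_on (hspan (i := 2) (j := 3) (l := 4) (by decide) (by decide) (by decide)) <| by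
      simp [Set.EqOn, h2i]
  have hker' (i : Fin 5) : B (d i) (d 2) = 0 := by
    rw [← hB.eq, hker, LinearMap.zero_apply]
  have h10 : B (d 1) (d 0) = 0 := by rw [← hB.eq, h01]
  have hbasis := hspan (i := 0) (j := 1) (l := 2) (by decide) (by decide) (by decide)
  refine LinearMap.ext_on hbasis ?_
  have hrow (i : Fin 5) (h0 : B (d i) (d 0) = 0) (h1 : B (d i) (d 1) = 0) : B (d i) = 0 :=
    LinearMap.ext_on hbasis (by simp [Set.EqOn, h0, h1, hker'])
  simp [Set.EqOn, hrow 0 (hBd 0) h01, hrow 1 h10 (hBd 1), hker]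

end Conics

section Catalecticant

open Matrix

lemma det_eq_zero_of_isotropic {R : Type*} [CommRing R] [IsDomain R]
    {M : Matrix (Fin 3) (Fin 3) R} {u : Fin 2 → Fin 3 → R} (hu : u 0 ⨯₃ u 1 ≠ 0)
    (hM : ∀ i j, u i ⬝ᵥ M *ᵥ u j = 0) : M.det = 0 := by
  obtain ⟨i, hi⟩ := Function.ne_iff.mp hu
  set D : Matrix (Fin 3) (Fin 3) R := of ![u 0, u 1, Pi.single i 1]
  have hD : D.det ≠ 0 := by
    have hdet : D.det = (Pi.single i 1 : Fin 3 → R) ⬝ᵥ u 0 ⨯₃ u 1 := by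
      rw [← triple_product_permutation, ← triple_product_permutation]
      exact (triple_product_eq_det _ _ _).symm
    rw [hdet]
    simpa using hi
  have happly (i j : Fin 3) : (D * M * Dᵀ) i j = D i ⬝ᵥ M *ᵥ D j := by
    rw [dotProduct_mulVec]
    rfl
  have hzero : (D * M * Dᵀ).det = 0 := by
    rw [det_fin_three]
    simp only [happly, show D 0 = u 0 from rfl, show D 1 = u 1 from rfl, hM]
    ring
  simpa [det_mul, det_transpose, hD] using hzero

section CommRing

variable {k : Type*} [CommRing k]

/-- The Hankel matrix `A_s`, for `s = 0, 1`. -/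
def hankel (a : Fin 6 → k) (s : Fin 2) : Matrix (Fin 3) (Fin 3) k :=
  of fun i j => a ⟨i + j + s, by omega⟩

/-- The pencil `x A_1 - y A_0`, whose determinant is the catalecticant covariant. -/
noncomputable def hankelPencil (a : Fin 6 → k) :
    Matrix (Fin 3) (Fin 3) (MvPolynomial (Fin 2) k) :=
  MvPolynomial.X (R := k) (0 : Fin 2) • (hankel a 1).map MvPolynomial.C -
    MvPolynomial.X (R := k) (1 : Fin 2) • (hankel a 0).map MvPolynomial.C

lemma cat22_eq_det_hankelPencil (a : Fin 6 → k) : cat22 a = (hankelPencil a).det := by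
  rw [cat22]
  congr 1

lemma hankelPencil_mulVec (a : Fin 6 → k) (e : Fin 3 → k) :
    hankelPencil a *ᵥ (MvPolynomial.C ∘ e) =
      MvPolynomial.X (R := k) (0 : Fin 2) • (MvPolynomial.C ∘ (hankel a 1 *ᵥ e)) -
        MvPolynomial.X (R := k) (1 : Fin 2) • (MvPolynomial.C ∘ (hankel a 0 *ᵥ e)) := by
  have hmap (s : Fin 2) : (hankel a s).map (MvPolynomial.C (σ := Fin 2)) *ᵥ (MvPolynomial.C ∘ e) =
      MvPolynomial.C ∘ (hankel a s *ᵥ e) :=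
    funext fun i => ((MvPolynomial.C (σ := Fin 2)).map_mulVec (hankel a s) e i).symm
  rw [hankelPencil, sub_mulVec, smul_mulVec, smul_mulVec, hmap, hmap]

/-- The bilinear form `uᵀ A_s v` of a Hankel matrix; its quadratic form is a conic in the plane of
binary quadratic forms. -/
noncomputable def hankelForm (a : Fin 6 → k) (s : Fin 2) : LinearMap.BilinForm k (Fin 3 → k) :=
  toBilin' (hankel a s)

lemma hankelForm_apply (a : Fin 6 → k) (s : Fin 2) (u v : Fin 3 → k) :
    hankelForm a s u v = u ⬝ᵥ hankel a s *ᵥ v :=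
  toBilin'_apply' _ _ _

lemma hankelForm_isSymm (a : Fin 6 → k) (s : Fin 2) : (hankelForm a s).IsSymm :=
  isSymm_toBilin'_iff_isSymm.mpr (IsSymm.ext fun i j => by simp [hankel, add_comm (i : ℕ)])

end CommRing

section IsDomain

variable {k : Type*} [CommRing k] [IsDomain k] {a : Fin 6 → k}

lemma cat22_eq_zero_of_mulVec_eq_zero {e : Fin 3 → k} (he : e ≠ 0)
    (h : ∀ s, hankel a s *ᵥ e = 0) : cat22 a = 0 := by
  rw [cat22_eq_det_hankelPencil, ← exists_mulVec_eq_zero_iff]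
  refine ⟨MvPolynomial.C ∘ e, fun h0 => he (funext fun i => ?_), ?_⟩
  · exact MvPolynomial.C_injective _ _ ((congrFun h0 i).trans (map_zero _).symm)
  · rw [hankelPencil_mulVec, h, h]
    ext1 i
    simp

lemma cat22_eq_zero_of_proportional {c : Fin 2 → k} (hc : c ≠ 0)
    (h : c 1 • hankel a 0 = c 0 • hankel a 1) : cat22 a = 0 := by
  have h' (i j : Fin 3) : c 1 * a ⟨i + j, by omega⟩ = c 0 * a ⟨i + j + 1, by omega⟩ :=
    congrFun (congrFun h i) j
  have hker (i : Fin 3) (s : Fin 2) :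
      a ⟨i + s, by omega⟩ * c 1 - a ⟨i + 1 + s, by omega⟩ * c 0 = 0 := by
    have := h' i ⟨s, by omega⟩
    grind
  refine cat22_eq_zero_of_mulVec_eq_zero (e := ![c 1, -c 0, 0]) (fun he => hc ?_) fun s => ?_
  · ext s
    fin_cases s
    · simpa using congrFun he 1
    · simpa using congrFun he 0
  · ext i
    rw [mulVec, vec3_dotProduct]
    simpa [hankel, sub_eq_add_neg] using hker i s

lemma cat22_eq_zero_of_isotropic {u : Fin 2 → Fin 3 → k} (hu : u 0 ⨯₃ u 1 ≠ 0)
    (h : ∀ s i j, hankelForm a s (u i) (u j) = 0) : cat22 a = 0 := by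
  rw [cat22_eq_det_hankelPencil]
  refine det_eq_zero_of_isotropic (u := fun i => MvPolynomial.C ∘ u i) (fun h0 => hu ?_)
    fun i j => ?_
  · ext i
    have := congrFun h0 i
    apply MvPolynomial.C_injective (Fin 2) k
    fin_cases i <;> simpa [cross_apply] using this
  · have hC (s : Fin 2) : (MvPolynomial.C (σ := Fin 2) ∘ u i) ⬝ᵥ
        (MvPolynomial.C ∘ (hankel a s *ᵥ u j)) = 0 := by
      rw [← RingHom.map_dotProduct, ← hankelForm_apply, h, map_zero]
    rw [hankelPencil_mulVec, dotProduct_sub, dotProduct_smul, dotProduct_smul, hC, hC]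
    simp

end IsDomain

section Field

variable {k : Type*} [Field k] {a : Fin 6 → k}

lemma cat22_eq_zero_of_apply_eq_zero {u v : Fin 3 → k} (huv : LinearIndependent k ![u, v])
    (hu : ∀ s, hankelForm a s u u = 0) (hv : ∀ s, hankelForm a s v v = 0)
    (h : ∀ s, hankelForm a s u v = 0) : cat22 a = 0 := by
  have h' (s : Fin 2) : hankelForm a s v u = 0 := by rw [← (hankelForm_isSymm a s).eq, h]
  refine cat22_eq_zero_of_isotropic (u := ![u, v])
    (crossProduct_ne_zero_iff_linearIndependent.mpr huv) fun s => ?_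
  simp [Fin.forall_fin_two, hu, hv, h, h']

lemma cat22_eq_zero_of_five_points (h2 : (2 : k) ≠ 0) {d : Fin 5 → Fin 3 → k}
    (hd : Pairwise fun i j => LinearIndependent k ![d i, d j])
    (hq : ∀ s i, hankelForm a s (d i) (d i) = 0) : cat22 a = 0 := by
  by_cases hgen : ∀ i j l, i ≠ j → i ≠ l → j ≠ l → LinearIndependent k ![d l, d i, d j]
  · set c : Fin 2 → k := fun s => hankelForm a s (d 0) (d 1)
    by_cases hc : c = 0
    · exact cat22_eq_zero_of_apply_eq_zero (hd zero_ne_one) (hq · 0) (hq · 1) (congrFun hc)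
    have hzero : c 1 • hankelForm a 0 - c 0 • hankelForm a 1 = 0 := by
      refine eq_zero_of_general_position h2 ⟨fun x y => ?_⟩ (Module.finrank_fin_fun k)
        (fun i j l hij hil hjl => hgen j l i hjl hij.symm hil.symm) (fun i => ?_) ?_
      · simp [(hankelForm_isSymm a _).eq x y]
      · simp [hq]
      · simp [c, mul_comm]
    refine cat22_eq_zero_of_proportional hc (toBilin'.injective ?_)
    simpa only [map_smul] using sub_eq_zero.mp hzero
  · push Not at hgen
    obtain ⟨i, j, l, hij, hil, hjl, hcol⟩ := hgen
    have hspan : d l ∈ Submodule.span k {d i, d j} := by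
      by_contra hl
      refine hcol (linearIndependent_finCons.mpr ⟨hd hij, ?_⟩)
      simpa only [Matrix.range_cons, Matrix.range_empty, Set.union_empty, Set.singleton_union]
        using hl
    exact cat22_eq_zero_of_apply_eq_zero (hd hij) (hq · i) (hq · j) fun s =>
      apply_eq_zero_of_collinear h2 (hankelForm_isSymm a s) (hd hil) (hd hjl) hspan (hq s i)
        (hq s j) (hq s l)

end Field

end Catalecticant

section ConicCount

open Matrix Projectivization
open scoped LinearAlgebra.Projectivization

variable {k : Type*} [Field k]

lemma cat22_eq_zero_of_mem_multiplesLine [CharP k 2] {a : Fin 6 → k} {l : Fin 2 → k} (hl : l ≠ 0)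
    {u : Fin 2 → Fin 3 → k} (hu : ∀ s i, u s i ^ 2 = a ⟨2 * i + s, by omega⟩)
    (h : ∀ s, ∃ c : k, c • ![l 1 ^ 2, -(l 0 * l 1), l 0 ^ 2] = u s) : cat22 a = 0 := by
  choose c hc using h
  simp only [← hc] at hu
  have hcoeff (s : Fin 2) : (c s * l 1 ^ 2) ^ 2 = a ⟨s, by omega⟩ ∧
      (c s * (l 0 * l 1)) ^ 2 = a ⟨2 + s, by omega⟩ ∧
      (c s * l 0 ^ 2) ^ 2 = a ⟨4 + s, by omega⟩ := by
    simpa [Fin.forall_fin_succ] using hu s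
  have hker (t : Fin 4) : a ⟨t, by omega⟩ * l 0 ^ 2 + a ⟨t + 2, by omega⟩ * l 1 ^ 2 = 0 := by
    have := hcoeff 0
    have := hcoeff 1
    fin_cases t <;> grind [CharTwo.two_eq_zero]
  refine cat22_eq_zero_of_mulVec_eq_zero (e := ![l 0 ^ 2, 0, l 1 ^ 2]) (fun he => hl ?_) fun s => ?_
  · ext i
    fin_cases i
    · simpa using congrFun he 0
    · simpa using congrFun he 2
  · ext i
    rw [mulVec, vec3_dotProduct]
    simpa [hankel, add_right_comm] using hker ⟨i + s, by omega⟩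

open scoped Classical in
lemma card_hankelForm_eq_zero_le_four [Fintype (ℙ k (Fin 3 → k))] {a : Fin 6 → k}
    (h2 : (2 : k) ≠ 0) (hcat : cat22 a ≠ 0) :
    #{Q : ℙ k (Fin 3 → k) | ∀ s, hankelForm a s Q.rep Q.rep = 0} ≤ 4 := by
  by_contra! hcard
  obtain ⟨Q⟩ := Function.Embedding.nonempty_of_card_le (α := Fin 5)
    (β := ({Q : ℙ k (Fin 3 → k) | ∀ s, hankelForm a s Q.rep Q.rep = 0} : Finset _))
    (by rw [Fintype.card_fin, Fintype.card_coe]; exact hcard)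
  refine hcat (cat22_eq_zero_of_five_points h2 (d := fun i => (Q i).1.rep) (fun i j hij => ?_)
    fun s i => (mem_filter.mp (Q i).2).2 s)
  refine crossProduct_ne_zero_iff_linearIndependent.mp ?_
  rw [ne_eq,
    ← mk_eq_mk_iff_crossProduct_eq_zero (rep_nonzero _) (rep_nonzero _), mk_rep, mk_rep]
  exact fun h => hij (Q.injective (Subtype.ext h))

variable [Finite k]

lemma abs_sum_numLinearFactors_sub_one_le_card (s : Finset (ℙ k (Fin 3 → k))) :
    |∑ Q ∈ s, ((numLinearFactors Q.rep : ℤ) - 1)| ≤ #s := by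
  refine (abs_sum_le_sum_abs _ _).trans ((sum_le_card_nsmul _ _ 1 fun Q _ => ?_).trans (by simp))
  have := numLinearFactors_le_two Q.rep_nonzero
  rw [abs_le]
  omega

lemma exists_hankelForm_self_eq_sq [CharP k 2] (a : Fin 6 → k) :
    ∃ u : Fin 2 → Fin 3 → k, (∀ s i, u s i ^ 2 = a ⟨2 * i + s, by omega⟩) ∧
      ∀ s d, hankelForm a s d d = (u s ⬝ᵥ d) ^ 2 := by
  choose u hu using fun (s : Fin 2) (i : Fin 3) =>
    surjective_frobenius k 2 (a ⟨2 * i + s, by omega⟩)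
  refine ⟨u, hu, fun s d => ?_⟩
  simp only [frobenius_def] at hu
  rw [dotProduct, sum_pow_char, hankelForm_apply, vec3_dotProduct]
  simp only [mul_pow, hu, Fin.sum_univ_three, mulVec, vec3_dotProduct, hankel, of_apply]
  grind [CharTwo.two_eq_zero]

variable [Fintype (ℙ k (Fin 3 → k))]

open scoped Classical in
lemma sum_orthogonal_numLinearFactors_sub_one {u : ℙ k (Fin 3 → k)}
    (hu : ∀ z, u ≠ multiplesLine z) :
    ∑ Q : ℙ k (Fin 3 → k) with Q.orthogonal u, ((numLinearFactors Q.rep : ℤ) - 1) = 0 := by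
  have := Fintype.ofFinite (ℙ k (Fin 2 → k))
  have hcount : ∑ Q : ℙ k (Fin 3 → k) with Q.orthogonal u, numLinearFactors Q.rep =
      Nat.card k + 1 := by
    simp only [sum_numLinearFactors, filter_filter, card_orthogonal_inter (hu _)]
    simp [card_projectiveLine]
  rw [sum_sub_distrib, ← Nat.cast_sum, hcount]
  simp only [sum_const, card_orthogonal]
  simp

variable {a : Fin 6 → k}

open scoped Classical in
lemma abs_sum_hankelForm_eq_zero_le_one [CharP k 2] (hcat : cat22 a ≠ 0) :
    |∑ Q : ℙ k (Fin 3 → k) with ∀ s, hankelForm a s Q.rep Q.rep = 0,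
      ((numLinearFactors Q.rep : ℤ) - 1)| ≤ 1 := by
  obtain ⟨u, hu, hform⟩ := exists_hankelForm_self_eq_sq a
  have horth {s : Fin 2} (hs : u s ≠ 0) (Q : ℙ k (Fin 3 → k)) :
      Q.orthogonal (mk k (u s) hs) ↔ hankelForm a s Q.rep Q.rep = 0 := by
    conv_lhs => rw [← Q.mk_rep]
    rw [orthogonal_mk, hform, sq_eq_zero_iff, dotProduct_comm]
  obtain ⟨s, hs⟩ : ∃ s, u s ≠ 0 := by
    by_contra! h0
    exact hcat (cat22_eq_zero_of_mem_multiplesLine (l := ![1, 0]) (by simp) hu fun s => ⟨0, by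
      simp [h0]⟩)
  by_cases hpar : ∀ t, ∃ c : k, c • u s = u t
  · have hfilter (Q : ℙ k (Fin 3 → k)) :
        (∀ t, hankelForm a t Q.rep Q.rep = 0) ↔ Q.orthogonal (mk k (u s) hs) := by
      refine ⟨fun h => (horth hs Q).mpr (h s), fun h t => ?_⟩
      obtain ⟨c, hc⟩ := hpar t
      rw [horth, hform, sq_eq_zero_iff] at h
      rw [hform, ← hc, smul_dotProduct, h, smul_zero, sq_eq_zero_iff]
    simp only [hfilter]
    rw [sum_orthogonal_numLinearFactors_sub_one, abs_zero]
    · exact zero_le_one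
    intro z hz
    obtain ⟨c, hc⟩ := (mk_eq_mk_iff' _ _ _ _ _).mp hz
    refine hcat (cat22_eq_zero_of_mem_multiplesLine z.rep_nonzero hu fun t => ?_)
    obtain ⟨b, hb⟩ := hpar t
    exact ⟨b * c, by rw [mul_smul, hc, hb]⟩
  · push Not at hpar
    obtain ⟨t, ht⟩ := hpar
    have ht0 : u t ≠ 0 := fun h => ht 0 (by rw [zero_smul, h])
    have hne : mk k (u t) ht0 ≠ mk k (u s) hs := fun h =>
      let ⟨c, hc⟩ := (mk_eq_mk_iff' _ _ _ _ _).mp h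
      ht c hc
    refine (abs_sum_numLinearFactors_sub_one_le_card _).trans ?_
    rw [← Nat.cast_one, Nat.cast_le, ← card_orthogonal_inter hne]
    exact card_le_card (monotone_filter_right _ fun Q _ hQ =>
      ⟨(horth ht0 Q).mpr (hQ t), (horth hs Q).mpr (hQ s)⟩)

open scoped Classical in
lemma abs_sum_hankelForm_eq_zero_le_four (hcat : cat22 a ≠ 0) :
    |∑ Q : ℙ k (Fin 3 → k) with ∀ s, hankelForm a s Q.rep Q.rep = 0,
      ((numLinearFactors Q.rep : ℤ) - 1)| ≤ 4 := by
  by_cases h2 : (2 : k) = 0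
  · have := CharTwo.of_one_ne_zero_of_two_eq_zero one_ne_zero h2
    exact (abs_sum_hankelForm_eq_zero_le_one hcat).trans (by norm_num)
  · exact (abs_sum_numLinearFactors_sub_one_le_card _).trans
      (mod_cast card_hankelForm_eq_zero_le_four h2 hcat)

end ConicCount

section Apolarity

open Matrix

variable {k : Type*} [CommRing k] {a b : ℕ}

/-- The apolar contraction of the dual form `w` by the form `f`, the adjoint of the multiplication
by `f` with respect to the pairing. -/
def contract (w : Fin (a + b + 1) → k) (f : Fin (a + 1) → k) : Fin (b + 1) → k :=
  fun j => ∑ i : Fin (a + 1), w ⟨i + j, by omega⟩ * f i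

lemma pair_formMul (w : Fin (a + b + 1) → k) (f : Fin (a + 1) → k) (g : Fin (b + 1) → k) :
    pair w (formMul f g) = pair (contract w f) g := by
  have hcollect (q : Fin (a + 1) × Fin (b + 1)) :
      ∑ n, w n * (if (q.1 : ℕ) + q.2 = n then f q.1 * g q.2 else 0) =
        w ⟨q.1 + q.2, by omega⟩ * f q.1 * g q.2 := by
    rw [Finset.sum_eq_single (⟨q.1 + q.2, by omega⟩ : Fin (a + b + 1))]
    · simp [mul_assoc]
    · intro n _ hn
      rw [if_neg fun h => hn (Fin.ext h.symm), mul_zero]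
    · simp
  simp only [pair, formMul, contract, Finset.mul_sum, Finset.sum_mul]
  rw [Finset.sum_comm, Finset.sum_congr rfl fun q _ => hcollect q, Fintype.sum_prod_type,
    Finset.sum_comm]

lemma hankel_mulVec_eq_zero {w : Fin 6 → k} {f : Fin 3 → k}
    (h : contract (a := 2) (b := 3) w f = 0) (s : Fin 2) : hankel w s *ᵥ f = 0 := by
  ext i
  refine Eq.trans ?_ (congrFun h ⟨i + s, by omega⟩)
  simp only [mulVec, dotProduct, hankel, contract, of_apply, add_comm, add_left_comm]

lemma contract_formMul_self (w : Fin 6 → k) (d : Fin 3 → k) (s : Fin 2) :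
    contract (a := 4) (b := 1) w (formMul d d) s = hankelForm w s d d := by
  let w' : Fin 5 → k := fun i => w ⟨i + s, by omega⟩
  calc contract (a := 4) (b := 1) w (formMul d d) s
    _ = pair (n := 4) w' (formMul (a := 2) (b := 2) d d) := rfl
    _ = (hankel w s *ᵥ d) ⬝ᵥ d := by
      rw [pair_formMul (a := 2) (b := 2)]
      simp only [pair, contract, dotProduct, mulVec, hankel, of_apply, w', add_comm]
    _ = hankelForm w s d d := by rw [hankelForm_apply, dotProduct_comm]

end Apolarity

section CharacterSum

open Projectivization
open scoped LinearAlgebra.Projectivization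

variable {k R : Type*} [Field k] [Fintype k] [CommRing R]

open scoped Classical in
lemma sum_eq_zero_or_isSingularQuintic [Fintype (ℙ k (Fin 2 → k))] [Fintype (ℙ k (Fin 3 → k))]
    (f : (Fin 6 → k) → R) :
    ∑ v with v = 0 ∨ IsSingularQuintic v, f v =
      ∑ z : ℙ k (Fin 2 → k), ∑ v with FormDvd (formMul z.rep z.rep) v, f v -
        ∑ Q : ℙ k (Fin 3 → k), ((numLinearFactors Q.rep : ℤ) - 1 : ℤ) *
          ∑ v with FormDvd (formMul Q.rep Q.rep) v, f v := by
  have hind (v : Fin 6 → k) : (if v = 0 ∨ IsSingularQuintic v then f v else 0) =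
      ∑ z : ℙ k (Fin 2 → k), (if FormDvd (formMul z.rep z.rep) v then f v else 0) -
        ∑ Q : ℙ k (Fin 3 → k), ((numLinearFactors Q.rep : ℤ) - 1 : ℤ) *
          (if FormDvd (formMul Q.rep Q.rep) v then f v else 0) := by
    have := congrArg (fun n : ℤ => (n : R) * f v) (indicator_eq_zero_or_isSingularQuintic v)
    push_cast [card_filter, sum_filter, sub_mul, sum_mul, ite_mul, mul_ite, one_mul, zero_mul,
      mul_zero] at this ⊢
    exact this
  simp only [sum_filter, hind, sum_sub_distrib, mul_sum]
  exact congrArg₂ (· - ·) sum_comm sum_comm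

variable [IsDomain R] {ψ : AddChar k R} {a b : ℕ}

open scoped Classical in
lemma sum_addChar_pair (hψ : ψ ≠ 0) (u : Fin (b + 1) → k) :
    ∑ v, ψ (pair u v) = if u = 0 then (Fintype.card k : R) ^ (b + 1) else 0 := by
  let χ : AddChar (Fin (b + 1) → k) R := ψ.compAddMonoidHom
    (AddMonoidHom.mk' (pair u) fun v v' => by simp [pair, mul_add, Finset.sum_add_distrib])
  have hχ : χ = 0 ↔ u = 0 := by
    refine ⟨fun h => ?_, fun h => by ext v; simp [χ, h, pair]⟩
    by_contra hu
    obtain ⟨j, hj⟩ := Function.ne_iff.mp hu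
    refine hψ (DFunLike.ext _ _ fun x => ?_)
    have hx : pair u (Pi.single j (x / u j)) = x := by
      simp [pair, Pi.single_apply, mul_div_cancel₀ x hj]
    rw [← hx]
    exact DFunLike.congr_fun h (Pi.single j (x / u j))
  calc ∑ v, ψ (pair u v) = ∑ v, χ v := rfl
    _ = _ := by
      rw [AddChar.sum_eq_ite]
      simp [hχ]

open scoped Classical in
lemma sum_formDvd_addChar_pair (hψ : ψ ≠ 0) {d : Fin (a + 1) → k} (hd : d ≠ 0)
    (w : Fin (a + b + 1) → k) :
    ∑ v : Fin (a + b + 1) → k with FormDvd d v, ψ (pair w v) =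
      if contract w d = 0 then (Fintype.card k : R) ^ (b + 1) else 0 := by
  simp only [← sum_addChar_pair hψ, ← pair_formMul]
  refine (Finset.sum_nbij (formMul d) (fun c _ => ?_) (formMul_right_injective hd).injOn
    (fun v hv => ?_) fun _ _ => rfl).symm
  · simpa using formDvd_iff_exists_eq_formMul.mpr ⟨c, rfl⟩
  · obtain ⟨c, rfl⟩ := formDvd_iff_exists_eq_formMul.mp (mem_filter.mp hv).2
    exact ⟨c, by simp⟩

open scoped Classical in
lemma sum_addChar_pair_of_cat22_ne_zero [Fintype (ℙ k (Fin 3 → k))] (hψ : ψ ≠ 0) {w : Fin 6 → k}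
    (hcat : cat22 w ≠ 0) :
    ∑ v with v = 0 ∨ IsSingularQuintic v, ψ (pair (n := 5) w v) =
      (-∑ Q : ℙ k (Fin 3 → k) with ∀ s, hankelForm w s Q.rep Q.rep = 0,
        ((numLinearFactors Q.rep : ℤ) - 1) : ℤ) * (Fintype.card k : R) ^ 2 := by
  have := Fintype.ofFinite (ℙ k (Fin 2 → k))
  have hlin (z : ℙ k (Fin 2 → k)) :
      ∑ v with FormDvd (formMul z.rep z.rep) v, ψ (pair (n := 5) w v) = 0 := by
    have hz := formMul_ne_zero z.rep_nonzero z.rep_nonzero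
    rw [sum_formDvd_addChar_pair (a := 2) (b := 3) hψ hz, if_neg]
    exact fun h => hcat (cat22_eq_zero_of_mulVec_eq_zero hz (hankel_mulVec_eq_zero h))
  have hquad (Q : ℙ k (Fin 3 → k)) :
      ∑ v with FormDvd (formMul Q.rep Q.rep) v, ψ (pair (n := 5) w v) =
        if ∀ s, hankelForm w s Q.rep Q.rep = 0 then (Fintype.card k : R) ^ 2 else 0 := by
    rw [sum_formDvd_addChar_pair (a := 4) (b := 1) hψ
      (formMul_ne_zero Q.rep_nonzero Q.rep_nonzero)]
    simp only [funext_iff, contract_formMul_self, Pi.zero_apply]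
  simp only [sum_eq_zero_or_isSingularQuintic, hlin, hquad, sum_const_zero, zero_sub, mul_ite,
    mul_zero, ← sum_filter, ← sum_mul, ← Int.cast_sum, Int.cast_neg, neg_mul]

end CharacterSum

open scoped Classical in
theorem stmt0_general {k R : Type*} [Field k] [Fintype k] [CommRing R] [IsDomain R]
    {ψ : AddChar k R} (hψ : ψ ≠ 0) {w : Fin 6 → k} (hcat : cat22 w ≠ 0) :
    ∃ C : ℤ, |C| ≤ 4 ∧ ∑ v with v = 0 ∨ IsSingularQuintic v, ψ (pair (n := 5) w v) =
      C * (Fintype.card k : R) ^ 2 := by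
  have := Fintype.ofFinite (Projectivization k (Fin 3 → k))
  refine ⟨_, ?_, sum_addChar_pair_of_cat22_ne_zero hψ hcat⟩
  rw [abs_neg]
  exact abs_sum_hankelForm_eq_zero_le_four hcat

lemma stdAddChar_ne_zero (N : ℕ) [NeZero N] [Nontrivial (ZMod N)] :
    ZMod.stdAddChar (N := N) ≠ 0 := fun h =>
  one_ne_zero (α := ZMod N)
    (ZMod.injective_stdAddChar (by rw [h, AddChar.zero_apply, AddChar.zero_apply]))

lemma expSum_eq_sum_stdAddChar {p : ℕ} [Fact p.Prime] (w : Fin 6 → ZMod p)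
    [DecidablePred fun v : Fin 6 → ZMod p => v = 0 ∨ IsSingularQuintic v] :
    expSum p w = ∑ v with v = 0 ∨ IsSingularQuintic v, ZMod.stdAddChar (pair (n := 5) w v) := by
  rw [expSum, sum_filter]
  congr! 2 with v
  rw [ZMod.stdAddChar_apply, ZMod.toCircle_apply]

/-- If `w ∈ V₅` is nonzero and its catalecticant covariant `Cat_{2,2}(x,y:w)` is not the
zero cubic form, then `S(w) = C·p²` for some integer `C` with `|C| ≤ 4`. -/
theorem stmt0 (p : ℕ) [Fact p.Prime] (w : Fin 6 → ZMod p) (hw : w ≠ 0)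
    (hcat : cat22 w ≠ 0) :
    ∃ C : ℤ, |C| ≤ 4 ∧ expSum p w = (C : ℂ) * (p : ℂ) ^ 2 := by
  obtain ⟨C, hC, h⟩ := stmt0_general (stdAddChar_ne_zero p) hcat
  exact ⟨C, hC, by rwa [ZMod.card, ← expSum_eq_sum_stdAddChar] at h⟩
end

section
/- (Generalized Waring decomposition.) Let k be a field of arbitrary characteristic, f a nonzero homogeneous binary form of degree n ≥ 1 over k with irreducible factorization f = f_1^{e_1}·f_2^{e_2}⋯f_r^{e_r}, where the f_i are pairwise non-associate irreducible homogeneous binary forms, and let m ≥ n. Then the subspaces (⊥(f_i^{e_i}))_m ⊆ V_m, 1 ≤ i ≤ r, are linearly independent and their (internal direct) sum equals (⊥f)_m; that is, (⊥f)_m = ⊕_{i=1}^r (⊥(f_i^{e_i}))_m. -/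
open Finset

/-- The pairing between `w ∈ V_n` (encoded as a coefficient tuple) and a binary `n`-ic
form given as a polynomial in the variables `x = X 0`, `y = X 1`:
`(w, v) = ∑ i, w i * (coefficient of x^(n-i) * y^i in v)`. -/
noncomputable def pairPoly {k : Type*} [CommRing k] (n : ℕ) (w : Fin (n + 1) → k)
    (v : MvPolynomial (Fin 2) k) : k :=
  ∑ i : Fin (n + 1), w i *
    MvPolynomial.coeff (Finsupp.single 0 (n - (i : ℕ)) + Finsupp.single 1 (i : ℕ)) v

/-- The pairing with a fixed binary `n`-ic form, as a linear functional on `V_n`. -/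
noncomputable def pairL {k : Type*} [CommRing k] (n : ℕ) (v : MvPolynomial (Fin 2) k) :
    (Fin (n + 1) → k) →ₗ[k] k where
  toFun w := pairPoly n w v
  map_add' a b := by
    simp [pairPoly, add_mul, Finset.sum_add_distrib]
  map_smul' c a := by
    simp [pairPoly, Finset.mul_sum, mul_assoc]

/-- The degree `m` part `(⊥g)_m ⊆ V_m` of the apolar subspace of a binary form `g`
of degree `d`: all `w ∈ V_m` with `(w, g·h) = 0` for every form `h` of degree `m - d`. -/
noncomputable def perp {k : Type*} [CommRing k] (m d : ℕ) (g : MvPolynomial (Fin 2) k) :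
    Submodule k (Fin (m + 1) → k) :=
  ⨅ (h : MvPolynomial (Fin 2) k) (_ : h.IsHomogeneous (m - d)),
    LinearMap.ker (pairL m (g * h))

/-!
Under the pairing, `V_m` is the dual of the space `V_m^*` of forms of degree `m`, and `(⊥g)_m` is
the annihilator of the subspace of multiples of `g`. Taking annihilators exchanges intersections
and sums. A form is a multiple of each of several pairwise coprime forms exactly when it is a
multiple of their product, and this gives the sum. If `g` and `h` are coprime of total degree at
most `m`, a dimension count shows that the multiples of `g` and those of `h` together span `V_m^*`,
so `(⊥g)_m` and `(⊥h)_m` are disjoint; this gives the independence.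
-/

section Multiples

open MvPolynomial

variable {σ R : Type*} [CommSemiring R] {a m : ℕ}

instance finite_homogeneousSubmodule [Finite σ] : Module.Finite R (homogeneousSubmodule σ R m) :=
  .of_fg (homogeneousSubmodule_fg σ R m)

/-- The degree `m` part of the principal ideal `(g)`, as a submodule of the forms of degree `m`. -/
noncomputable def homogeneousMultiples (m : ℕ) (g : MvPolynomial σ R) :
    Submodule R (homogeneousSubmodule σ R m) :=
  ((Ideal.span {g}).restrictScalars R).submoduleOf (homogeneousSubmodule σ R m)

theorem mem_homogeneousMultiples {g : MvPolynomial σ R} {p : homogeneousSubmodule σ R m} :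
    p ∈ homogeneousMultiples m g ↔ g ∣ (p : MvPolynomial σ R) := by
  simp [homogeneousMultiples, Submodule.submoduleOf, Ideal.mem_span_singleton]

theorem homogeneousMultiples_anti {g h : MvPolynomial σ R} (hgh : g ∣ h) :
    homogeneousMultiples m h ≤ homogeneousMultiples m g := fun _ hp =>
  mem_homogeneousMultiples.2 (hgh.trans (mem_homogeneousMultiples.1 hp))

theorem homogeneousMultiples_inf [DecompositionMonoid (MvPolynomial σ R)]
    {g h : MvPolynomial σ R} (hgh : IsRelPrime g h) :
    homogeneousMultiples m g ⊓ homogeneousMultiples m h = homogeneousMultiples m (g * h) := by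
  ext p
  simp only [Submodule.mem_inf, mem_homogeneousMultiples]
  exact ⟨fun hp => hgh.mul_dvd hp.1 hp.2,
    fun hp => ⟨(dvd_mul_right g h).trans hp, (dvd_mul_left h g).trans hp⟩⟩

theorem iInf_homogeneousMultiples {ι : Type*} [Fintype ι] [DecompositionMonoid (MvPolynomial σ R)]
    {g : ι → MvPolynomial σ R} (hg : Pairwise (Function.onFun IsRelPrime g)) :
    ⨅ i, homogeneousMultiples m (g i) = homogeneousMultiples m (∏ i, g i) := by
  ext p
  simp only [Submodule.mem_iInf, mem_homogeneousMultiples]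
  exact ⟨Fintype.prod_dvd_of_isRelPrime hg,
    fun h i => (dvd_prod_of_mem g (mem_univ i)).trans h⟩

theorem exists_isHomogeneous_eq_mul_of_dvd {c : ℕ} {g p : MvPolynomial σ R}
    (hg : g.IsHomogeneous a) (hp : p.IsHomogeneous (a + c)) (hgp : g ∣ p) :
    ∃ q : MvPolynomial σ R, q.IsHomogeneous c ∧ p = g * q := by
  obtain ⟨q, rfl⟩ := hgp
  let _ := gradedAlgebra (σ := σ) (R := R)
  have h := DirectSum.coe_decompose_mul_add_of_left_mem
    (homogeneousSubmodule σ R) (j := c) (b := q) hg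
  rw [DirectSum.decompose_of_mem_same _ hp] at h
  exact ⟨_, SetLike.coe_mem (DirectSum.decompose (homogeneousSubmodule σ R) q c), h⟩

/-- Multiplication by a form `g` of degree `a`, as a map from forms of degree `m - a` to forms of
degree `m`. -/
noncomputable def homogeneousMulLeft {g : MvPolynomial σ R} (hg : g.IsHomogeneous a)
    (ham : a ≤ m) : homogeneousSubmodule σ R (m - a) →ₗ[R] homogeneousSubmodule σ R m :=
  (LinearMap.mulLeft R g).restrict fun q hq => by
    rw [mem_homogeneousSubmodule, ← Nat.add_sub_cancel' ham]
    exact hg.mul hq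

theorem range_homogeneousMulLeft {g : MvPolynomial σ R} (hg : g.IsHomogeneous a) (ham : a ≤ m) :
    LinearMap.range (homogeneousMulLeft hg ham) = homogeneousMultiples m g := by
  ext p
  rw [mem_homogeneousMultiples]
  constructor
  · rintro ⟨q, rfl⟩
    exact dvd_mul_right g q
  · intro hgp
    have hp : (p : MvPolynomial σ R).IsHomogeneous (a + (m - a)) := by
      rw [Nat.add_sub_cancel' ham]
      exact p.2
    obtain ⟨q, hq, hpq⟩ := exists_isHomogeneous_eq_mul_of_dvd hg hp hgp
    exact ⟨⟨q, hq⟩, Subtype.ext hpq.symm⟩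

theorem homogeneousMulLeft_injective [IsLeftCancelMulZero (MvPolynomial σ R)]
    {g : MvPolynomial σ R} (hg : g.IsHomogeneous a) (hg0 : g ≠ 0) (ham : a ≤ m) :
    Function.Injective (homogeneousMulLeft hg ham) := fun _ _ h =>
  Subtype.ext (mul_left_cancel₀ hg0 (congrArg Subtype.val h))

end Multiples

section BinaryForms

open MvPolynomial

/-- The exponents of total degree `m` in two variables, listed as those of the monomials
`x ^ (m - i) * y ^ i`. -/
noncomputable def binaryExponentEquiv (m : ℕ) :
    Fin (m + 1) ≃ {s : Fin 2 →₀ ℕ | s.degree = m} where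
  toFun i := ⟨Finsupp.single 0 (m - (i : ℕ)) + Finsupp.single 1 (i : ℕ), by
    simp [Finsupp.degree_eq_sum, Nat.sub_add_cancel (Fin.is_le i)]⟩
  invFun s := ⟨s.1 1, Nat.lt_succ_of_le ((Finsupp.le_degree 1 s.1).trans_eq s.2)⟩
  left_inv i := by simp
  right_inv := by
    rintro ⟨s, rfl⟩
    ext j
    fin_cases j <;> simp [Finsupp.degree_eq_sum]

variable {R : Type*} [CommRing R] {m : ℕ}

/-- The basis of the space of binary forms of degree `m` given by the monomials
`x ^ (m - i) * y ^ i`. -/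
noncomputable def binaryFormBasis (R : Type*) [CommRing R] (m : ℕ) :
    Module.Basis (Fin (m + 1)) R (homogeneousSubmodule (Fin 2) R m) :=
  ((basisRestrictSupport R {s : Fin 2 →₀ ℕ | s.degree = m}).reindex
    (binaryExponentEquiv m).symm).map
      (LinearEquiv.ofEq _ _ (homogeneousSubmodule_eq_finsupp_supported (Fin 2) R m).symm)

theorem binaryFormBasis_repr_apply (p : homogeneousSubmodule (Fin 2) R m) (i : Fin (m + 1)) :
    (binaryFormBasis R m).repr p i =
      coeff (Finsupp.single 0 (m - (i : ℕ)) + Finsupp.single 1 (i : ℕ))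
        (p : MvPolynomial (Fin 2) R) :=
  rfl

theorem finrank_homogeneousSubmodule_fin_two [Nontrivial R] :
    Module.finrank R (homogeneousSubmodule (Fin 2) R m) = m + 1 := by
  rw [Module.finrank_eq_card_basis (binaryFormBasis R m), Fintype.card_fin]

/-- The identification of `V_m` with the dual of the space of binary forms of degree `m`. -/
noncomputable def pairingEquiv (R : Type*) [CommRing R] (m : ℕ) :
    (Fin (m + 1) → R) ≃ₗ[R] Module.Dual R (homogeneousSubmodule (Fin 2) R m) :=
  (binaryFormBasis R m).dualBasis.equivFun.symm

theorem pairingEquiv_apply (w : Fin (m + 1) → R) (p : homogeneousSubmodule (Fin 2) R m) :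
    pairingEquiv R m w p = pairPoly m w p := by
  simp [pairingEquiv, pairPoly, Module.Basis.equivFun_symm_apply, binaryFormBasis_repr_apply]

theorem mem_perp_iff {a : ℕ} {g : MvPolynomial (Fin 2) R} {w : Fin (m + 1) → R} :
    w ∈ perp m a g ↔
      ∀ h : MvPolynomial (Fin 2) R, h.IsHomogeneous (m - a) → pairPoly m w (g * h) = 0 := by
  simp only [perp, Submodule.mem_iInf, LinearMap.mem_ker]
  rfl

theorem perp_eq_map_dualAnnihilator {a : ℕ} (ham : a ≤ m) {g : MvPolynomial (Fin 2) R}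
    (hg : g.IsHomogeneous a) :
    perp m a g = (homogeneousMultiples m g).dualAnnihilator.map
      (pairingEquiv R m).symm.toLinearMap := by
  ext w
  rw [Submodule.mem_map_equiv, LinearEquiv.symm_symm, ← range_homogeneousMulLeft hg ham,
    Submodule.mem_dualAnnihilator]
  simp only [LinearMap.mem_range, forall_exists_index, forall_apply_eq_imp_iff, mem_perp_iff,
    pairingEquiv_apply]
  exact ⟨fun hw q => hw q q.2, fun hw q hq => hw ⟨q, hq⟩⟩

theorem perp_anti {a b : ℕ} {g h : MvPolynomial (Fin 2) R} (ham : a ≤ m) (hbm : b ≤ m)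
    (hg : g.IsHomogeneous a) (hh : h.IsHomogeneous b) (hgh : g ∣ h) : perp m a g ≤ perp m b h := by
  rw [perp_eq_map_dualAnnihilator ham hg, perp_eq_map_dualAnnihilator hbm hh]
  exact Submodule.map_mono (Submodule.dualAnnihilator_anti (homogeneousMultiples_anti hgh))

end BinaryForms

section Field

variable {k : Type*} [Field k] {a b m : ℕ} {g h : MvPolynomial (Fin 2) k}

theorem finrank_homogeneousMultiples (ham : a ≤ m) (hg : g.IsHomogeneous a) (hg0 : g ≠ 0) :
    Module.finrank k (homogeneousMultiples m g) = m - a + 1 := by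
  rw [← range_homogeneousMulLeft hg ham,
    LinearMap.finrank_range_of_inj (homogeneousMulLeft_injective hg hg0 ham),
    finrank_homogeneousSubmodule_fin_two]

theorem codisjoint_homogeneousMultiples (habm : a + b ≤ m) (hg : g.IsHomogeneous a) (hg0 : g ≠ 0)
    (hh : h.IsHomogeneous b) (hh0 : h ≠ 0) (hgh : IsRelPrime g h) :
    Codisjoint (homogeneousMultiples m g) (homogeneousMultiples m h) := by
  rw [codisjoint_iff]
  apply Submodule.eq_top_of_finrank_eq
  have hdim := Submodule.finrank_sup_add_finrank_inf_eq
    (homogeneousMultiples m g) (homogeneousMultiples m h)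
  rw [homogeneousMultiples_inf hgh,
    finrank_homogeneousMultiples habm (hg.mul hh) (mul_ne_zero hg0 hh0),
    finrank_homogeneousMultiples (by lia) hg hg0,
    finrank_homogeneousMultiples (by lia) hh hh0] at hdim
  rw [finrank_homogeneousSubmodule_fin_two]
  lia

theorem disjoint_perp (habm : a + b ≤ m) (hg : g.IsHomogeneous a) (hg0 : g ≠ 0)
    (hh : h.IsHomogeneous b) (hh0 : h ≠ 0) (hgh : IsRelPrime g h) :
    Disjoint (perp m a g) (perp m b h) := by
  rw [perp_eq_map_dualAnnihilator (by lia) hg, perp_eq_map_dualAnnihilator (by lia) hh]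
  refine Submodule.disjoint_map (pairingEquiv k m).symm.injective ?_
  rw [disjoint_iff, ← Submodule.dualAnnihilator_sup_eq,
    (codisjoint_homogeneousMultiples habm hg hg0 hh hh0 hgh).eq_top,
    Submodule.dualAnnihilator_top]

variable {ι : Type*} [Fintype ι] {u : ι → MvPolynomial (Fin 2) k} {c : ι → ℕ}

theorem iSup_perp_eq_perp_prod (hu : ∀ i, (u i).IsHomogeneous (c i))
    (hrel : Pairwise (Function.onFun IsRelPrime u)) (hc : ∑ i, c i ≤ m) :
    ⨆ i, perp m (c i) (u i) = perp m (∑ i, c i) (∏ i, u i) := by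
  have hcm (i : ι) : c i ≤ m :=
    (single_le_sum (fun _ _ => Nat.zero_le _) (mem_univ i)).trans hc
  simp_rw [perp_eq_map_dualAnnihilator (hcm _) (hu _)]
  rw [perp_eq_map_dualAnnihilator hc (.prod _ u c fun i _ => hu i),
    ← Submodule.map_iSup, ← Subspace.dualAnnihilator_iInf_eq, iInf_homogeneousMultiples hrel]

theorem iSupIndep_perp (hu : ∀ i, (u i).IsHomogeneous (c i)) (hu0 : ∀ i, u i ≠ 0)
    (hrel : Pairwise (Function.onFun IsRelPrime u)) (hc : ∑ i, c i ≤ m) :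
    iSupIndep fun i => perp m (c i) (u i) := by
  classical
  intro i
  have hsum := add_sum_erase univ c (mem_univ i)
  have hprod := MvPolynomial.IsHomogeneous.prod (univ.erase i) u c fun j _ => hu j
  have hle : ⨆ j, ⨆ (_ : j ≠ i), perp m (c j) (u j) ≤
      perp m (∑ j ∈ univ.erase i, c j) (∏ j ∈ univ.erase i, u j) :=
    iSup₂_le fun j hji => by
      have hj : j ∈ univ.erase i := mem_erase.2 ⟨hji, mem_univ j⟩
      have hcj := single_le_sum (f := c) (fun _ _ => Nat.zero_le _) hj
      exact perp_anti (by lia) (by lia) (hu j) hprod (dvd_prod_of_mem u hj)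
  exact (disjoint_perp (by lia) (hu i) (hu0 i) hprod (prod_ne_zero_iff.2 fun j _ => hu0 j)
    (.prod_right fun j hj => hrel (ne_of_mem_erase hj).symm)).mono_right hle

end Field

theorem isRelPrime_pow_of_not_associated {M : Type*} [CommMonoid M] [DecompositionMonoid M]
    {p q : M} (hp : Irreducible p) (hq : Irreducible q) (hpq : ¬ Associated p q) (a b : ℕ) :
    IsRelPrime (p ^ a) (q ^ b) :=
  .pow (hp.isRelPrime_iff_not_dvd.2 fun h => hpq (hp.associated_of_dvd hq h))

theorem stmt3_general {k ι : Type*} [Field k] [Fintype ι] {n m : ℕ} (hm : n ≤ m)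
    {f : MvPolynomial (Fin 2) k} (hf : f ≠ 0) (hfhom : f.IsHomogeneous n)
    {g : ι → MvPolynomial (Fin 2) k} {a : ι → ℕ} (hg : ∀ i, (g i).IsHomogeneous (a i))
    (hrel : Pairwise (Function.onFun IsRelPrime g)) (hfact : f = ∏ i, g i) :
    iSupIndep (fun i => perp m (a i) (g i)) ∧ ⨆ i, perp m (a i) (g i) = perp m n f := by
  subst hfact
  obtain rfl : n = ∑ i, a i := hfhom.inj_right (.prod _ g a fun i _ => hg i) hf
  exact ⟨iSupIndep_perp hg (fun i => prod_ne_zero_iff.1 hf i (mem_univ i)) hrel hm,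
    iSup_perp_eq_perp_prod hg hrel hm⟩

/-- Generalized Waring decomposition: if `f` is a nonzero binary form of degree `n ≥ 1`
over any field, with irreducible factorization `f = ∏ i, (f' i)^(e i)` into pairwise
non-associate irreducible homogeneous factors `f' i` of degree `d i`, and `m ≥ n`, then
the subspaces `(⊥(f' i)^(e i))_m ⊆ V_m` are independent and their sum is `(⊥f)_m`. -/
theorem stmt3 {k : Type*} [Field k] (n m : ℕ) (hn : 1 ≤ n) (hm : n ≤ m)
    (f : MvPolynomial (Fin 2) k) (hf : f ≠ 0) (hfhom : f.IsHomogeneous n)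
    (r : ℕ) (f' : Fin r → MvPolynomial (Fin 2) k) (d e : Fin r → ℕ)
    (hirr : ∀ i, Irreducible (f' i))
    (hhom : ∀ i, (f' i).IsHomogeneous (d i))
    (he : ∀ i, 1 ≤ e i)
    (hna : ∀ i j, i ≠ j → ¬ Associated (f' i) (f' j))
    (hfact : f = ∏ i, f' i ^ e i) :
    iSupIndep (fun i => perp m (e i * d i) (f' i ^ e i)) ∧
    (⨆ i, perp m (e i * d i) (f' i ^ e i)) = perp m n f :=
  stmt3_general hm hf hfhom (fun i => mul_comm (d i) (e i) ▸ (hhom i).pow (e i))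
    (fun i j hij => isRelPrime_pow_of_not_associated (hirr i) (hirr j) (hna i j hij) (e i) (e j))
    hfact
end

section
/- Let p be a prime and w ∈ V_5. Then S(w) = p⁴·N₁ + p²·(N₂ − N₃), where N₁ = #{ [ℓ] ∈ P(V_1^*) : ℓ² is apolar to w }, N₂ = #{ [q] ∈ P(V_2^*) : q² is apolar to w }, and N₃ = #{ ([ℓ₁],[ℓ₂]) ∈ P(V_1^*)×P(V_1^*) : ℓ₁²ℓ₂² is apolar to w }. -/
open Finset

/-! Write a nonzero form as `v = s² u` with `u` squarefree. Then `d² ∣ v` if and only if `d ∣ s`,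
and for a quintic `deg s ≤ 2`. Going through `deg s = 0, 1, 2`, the number of linear divisors of
`s` plus the number of quadratic ones minus the number of pairs of linear forms whose product
divides `s` is `0` if `s` is constant and `1` otherwise. Since the ground field is perfect, `s` is
nonconstant exactly when `v` is singular. For `v = 0` the three counts are those of all classes,
and `(q + 1) + (q² + q + 1) - (q + 1)² = 1`. Hence the indicator function of the zero and singular
quintics is a signed count of the `ℓ²`, `q²` and `ℓ₁²ℓ₂²` dividing `v`. Summing a nontrivial
character `ψ (w, v)` over the multiples of a form `f` of degree `m`, a space of dimension `6 - m`,
gives its cardinality if `f` is apolar to `w` and `0` otherwise. -/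

theorem exists_sq_mul_squarefree {R : Type*} [CommMonoidWithZero R] [IsCancelMulZero R]
    [WfDvdMonoid R] {v : R} (hv : v ≠ 0) : ∃ s u : R, Squarefree u ∧ s ^ 2 * u = v := by
  induction v using (wellFounded_dvdNotUnit (α := R)).induction with
  | _ v ih =>
    by_cases hsq : Squarefree v
    · exact ⟨1, v, hsq, by rw [one_pow, one_mul]⟩
    · obtain ⟨d, ⟨c, rfl⟩, hd⟩ : ∃ d, d * d ∣ v ∧ ¬ IsUnit d := by
        simpa only [Squarefree, not_forall, exists_prop] using hsq
      have hc : c ≠ 0 := right_ne_zero_of_mul hv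
      obtain ⟨s, u, hu, rfl⟩ := ih c
        ⟨hc, d * d, fun h => hd (isUnit_of_mul_isUnit_left h), mul_comm _ _⟩ hc
      exact ⟨d * s, u, hu, by rw [mul_pow, sq d, mul_assoc]⟩

theorem exists_forall_sq_dvd_iff_dvd {R : Type*} [CommMonoidWithZero R]
    [UniqueFactorizationMonoid R] {v : R} (hv : v ≠ 0) : ∃ s : R, ∀ d, d ^ 2 ∣ v ↔ d ∣ s := by
  obtain ⟨s, u, hu, rfl⟩ := exists_sq_mul_squarefree hv
  refine ⟨s, fun d => ⟨fun h => ?_, fun h => (pow_dvd_pow_of_dvd h 2).mul_right u⟩⟩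
  have hs : s ≠ 0 := by
    rintro rfl
    simp only [zero_pow two_ne_zero, zero_mul, ne_eq, not_true_eq_false] at hv
  obtain ⟨d', s', c, hrel, rfl, rfl⟩ := UniqueFactorizationMonoid.exists_reduced_factors' d s hs
  have hd' : d' ^ 2 ∣ s' ^ 2 * u := by
    rw [mul_pow, mul_pow, mul_assoc] at h
    exact (mul_dvd_mul_iff_left (pow_ne_zero 2 (left_ne_zero_of_mul hs))).mp h
  have hunit : IsUnit d' := hu d' (by simpa only [sq] using hrel.pow.dvd_of_dvd_mul_left hd')
  exact (mul_dvd_mul_iff_left (left_ne_zero_of_mul hs)).mpr hunit.dvd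

section Homogeneous

open MvPolynomial

variable {σ R : Type*} [CommSemiring R]

theorem order_le_totalDegree {p : MvPolynomial σ R} (hp : p ≠ 0) :
    (p : MvPowerSeries σ R).order ≤ p.totalDegree := by
  obtain ⟨d, hd⟩ := support_nonempty.mpr hp
  calc (p : MvPowerSeries σ R).order ≤ d.degree :=
        MvPowerSeries.order_le (by simpa only [coeff_coe, mem_support_iff] using hd)
    _ ≤ p.totalDegree := Nat.cast_le.mpr (le_totalDegree hd)

theorem isHomogeneous_iff_totalDegree_le_order {p : MvPolynomial σ R} :
    p.IsHomogeneous p.totalDegree ↔ p.totalDegree ≤ (p : MvPowerSeries σ R).order := by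
  constructor
  · refine fun h => MvPowerSeries.le_order fun d hd => ?_
    rw [coeff_coe]
    exact h.coeff_eq_zero (Nat.cast_lt.mp hd).ne
  · intro h d hd
    have hle : p.totalDegree ≤ d.degree := Nat.cast_le.mp <|
      h.trans (MvPowerSeries.order_le (by rwa [coeff_coe]))
    have : d.degree = p.totalDegree := (le_totalDegree (mem_support_iff.mpr hd)).antisymm hle
    rwa [Finsupp.degree_eq_weight_one] at this

-- Order and total degree are both additive, order ≤ total degree, and equality characterises
-- homogeneity.
theorem isHomogeneous_of_dvd [IsDomain R] {p q : MvPolynomial σ R} {n : ℕ}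
    (hq : q.IsHomogeneous n) (hq0 : q ≠ 0) (h : p ∣ q) : p.IsHomogeneous p.totalDegree := by
  obtain ⟨r, rfl⟩ := h
  have hp0 := left_ne_zero_of_mul hq0
  have hr0 := right_ne_zero_of_mul hq0
  obtain rfl := hq.totalDegree hq0
  rw [isHomogeneous_iff_totalDegree_le_order] at hq ⊢
  rw [totalDegree_mul_of_isDomain hp0 hr0, MvPolynomial.coe_mul, MvPowerSeries.order_mul,
    Nat.cast_add] at hq
  have hr : (r : MvPowerSeries σ R).order ≤ r.totalDegree := order_le_totalDegree hr0
  by_contra! hlt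
  exact hq.not_gt
    (ENat.add_lt_add_of_lt_of_le (hr.trans_lt (ENat.natCast_lt_top _)).ne hlt hr)

theorem exists_isHomogeneous_mul_eq [IsDomain R] {p q : MvPolynomial σ R} {n : ℕ}
    (hq : q.IsHomogeneous n) (hq0 : q ≠ 0) (h : p ∣ q) :
    ∃ (r : MvPolynomial σ R) (e : ℕ), r.IsHomogeneous e ∧ p.totalDegree + e = n ∧ p * r = q := by
  obtain ⟨r, rfl⟩ := h
  refine ⟨r, r.totalDegree, isHomogeneous_of_dvd hq hq0 (dvd_mul_left r p), ?_, rfl⟩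
  rw [← totalDegree_mul_of_isDomain (left_ne_zero_of_mul hq0) (right_ne_zero_of_mul hq0),
    hq.totalDegree hq0]

theorem isUnit_iff_eq_zero_of_isHomogeneous {k : Type*} [Field k] {p : MvPolynomial σ k} {n : ℕ}
    (hp : p.IsHomogeneous n) (hp0 : p ≠ 0) : IsUnit p ↔ n = 0 := by
  rw [isUnit_iff_totalDegree_of_isReduced, hp.totalDegree hp0, and_iff_right_of_imp]
  rintro rfl
  rw [isUnit_iff_ne_zero, ← C_ne_zero (σ := σ),
    ← totalDegree_eq_zero_iff_eq_C.mp (hp.totalDegree hp0)]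
  exact hp0

end Homogeneous

namespace BinaryForm

section CoefficientTuples

variable {R : Type*} [CommRing R] {n : ℕ}

/-- The polynomial `∑ i, f i * T ^ i`, that is, the binary form `f` evaluated at `(1, T)`. -/
noncomputable def dehomogenize : (Fin (n + 1) → R) →ₗ[R] Polynomial R :=
  (Polynomial.degreeLT R (n + 1)).subtype ∘ₗ (Polynomial.degreeLTEquiv R (n + 1)).symm

theorem dehomogenize_apply (f : Fin (n + 1) → R) :
    dehomogenize f = ∑ i : Fin (n + 1), Polynomial.monomial i (f i) := rfl

theorem coeff_dehomogenize (f : Fin (n + 1) → R) (i : Fin (n + 1)) :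
    (dehomogenize f).coeff i = f i :=
  congrFun ((Polynomial.degreeLTEquiv R (n + 1)).apply_symm_apply f) i

theorem natDegree_dehomogenize_le (f : Fin (n + 1) → R) : (dehomogenize f).natDegree ≤ n := by
  rw [dehomogenize_apply]
  exact Polynomial.natDegree_sum_le_of_forall_le _ _ fun i _ =>
    (Polynomial.natDegree_monomial_le _).trans i.is_le

theorem dehomogenize_formMul {a b : ℕ} (f : Fin (a + 1) → R) (g : Fin (b + 1) → R) :
    dehomogenize (formMul f g) = dehomogenize f * dehomogenize g := by
  simp only [dehomogenize_apply, formMul, map_sum]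
  rw [sum_comm, Fintype.sum_prod_type, sum_mul_sum]
  refine sum_congr rfl fun i _ => sum_congr rfl fun j _ => ?_
  rw [Polynomial.monomial_mul_monomial, sum_eq_single ⟨i + j, by omega⟩]
  · rw [if_pos rfl]
  · intro l _ hl
    rw [if_neg fun h => hl (Fin.ext h.symm), map_zero]
  · exact fun h => absurd (mem_univ _) h

/-- The binary form encoded by a coefficient tuple, as a bivariate polynomial. The variables of
`Polynomial.homogenize` are numbered so that `x` is `X 1` and `y` is `X 0`. -/
noncomputable def toPoly : (Fin (n + 1) → R) →ₗ[R] MvPolynomial (Fin 2) R :=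
  Polynomial.homogenizeLM n ∘ₗ dehomogenize

theorem toPoly_apply (f : Fin (n + 1) → R) : toPoly f = (dehomogenize f).homogenize n := rfl

theorem isHomogeneous_toPoly (f : Fin (n + 1) → R) : (toPoly f).IsHomogeneous n :=
  Polynomial.isHomogeneous_homogenize _

theorem toPoly_eq_zero_iff {f : Fin (n + 1) → R} : toPoly f = 0 ↔ f = 0 := by
  rw [toPoly_apply, Polynomial.homogenize_eq_zero_iff (natDegree_dehomogenize_le f)]
  refine ⟨fun h => funext fun i => ?_, fun h => h ▸ map_zero _⟩
  rw [← coeff_dehomogenize f i, h, Polynomial.coeff_zero, Pi.zero_apply]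

theorem toPoly_injective : Function.Injective (toPoly (R := R) (n := n)) :=
  (injective_iff_map_eq_zero _).mpr fun _ => toPoly_eq_zero_iff.mp

theorem exists_toPoly_eq {r : MvPolynomial (Fin 2) R} (hr : r.IsHomogeneous n) :
    ∃ f : Fin (n + 1) → R, toPoly f = r := by
  set p : Polynomial R := MvPolynomial.aeval ![Polynomial.X, 1] r with hp
  refine ⟨fun i => p.coeff i, ?_⟩
  rw [← Polynomial.homogenize_eq_of_isHomogeneous hr hp.symm, toPoly_apply]
  ext m
  rw [Polynomial.coeff_homogenize, Polynomial.coeff_homogenize]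
  split_ifs with hm
  · exact coeff_dehomogenize (fun i => p.coeff i) ⟨m 0, by omega⟩
  · rfl

theorem toPoly_formMul {a b : ℕ} (f : Fin (a + 1) → R) (g : Fin (b + 1) → R) :
    toPoly (formMul f g) = toPoly f * toPoly g := by
  rw [toPoly_apply, dehomogenize_formMul, Polynomial.homogenize_mul _ _
    (natDegree_dehomogenize_le f) (natDegree_dehomogenize_le g), toPoly_apply, toPoly_apply]

theorem toPoly_dvd_toPoly_iff [IsDomain R] {a b : ℕ} {f : Fin (a + 1) → R}
    {v : Fin (a + b + 1) → R} :
    toPoly f ∣ toPoly v ↔ ∃ h : Fin (b + 1) → R, formMul f h = v := by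
  constructor
  · intro h
    rcases eq_or_ne v 0 with rfl | hv
    · exact ⟨0, toPoly_injective (by rw [toPoly_formMul, map_zero, map_zero, mul_zero])⟩
    have hv' : toPoly v ≠ 0 := toPoly_eq_zero_iff.not.mpr hv
    obtain ⟨r, e, hr, hdeg, hmul⟩ := exists_isHomogeneous_mul_eq (isHomogeneous_toPoly v) hv' h
    rw [(isHomogeneous_toPoly f).totalDegree (ne_zero_of_dvd_ne_zero hv' h),
      add_right_inj] at hdeg
    obtain ⟨g, rfl⟩ := exists_toPoly_eq (hdeg ▸ hr)
    exact ⟨g, toPoly_injective (by rw [toPoly_formMul, hmul])⟩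
  · rintro ⟨g, rfl⟩
    exact ⟨_, toPoly_formMul f g⟩

theorem exists_homogenize_eq {r : MvPolynomial (Fin 2) R} (hr : r.IsHomogeneous n) :
    ∃ p : Polynomial R, p.natDegree ≤ n ∧ p.homogenize n = r := by
  obtain ⟨f, rfl⟩ := exists_toPoly_eq hr
  exact ⟨_, natDegree_dehomogenize_le f, rfl⟩

theorem map_toPoly {S : Type*} [CommRing S] (φ : R →+* S) (f : Fin (n + 1) → R) :
    MvPolynomial.map φ (toPoly f) = toPoly fun i => φ (f i) := by
  rw [toPoly_apply, toPoly_apply, ← Polynomial.homogenize_map, dehomogenize_apply,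
    dehomogenize_apply, Polynomial.map_sum]
  simp only [Polynomial.map_monomial]

end CoefficientTuples

section Squarefree

variable {R : Type*} [CommRing R] [IsDomain R] {k : Type*} [Field k] {n : ℕ}

theorem X_one_pow_dvd_homogenize_iff {p : Polynomial R} (hp : p ≠ 0) (hn : p.natDegree ≤ n)
    {m : ℕ} : MvPolynomial.X 1 ^ m ∣ p.homogenize n ↔ p.natDegree + m ≤ n := by
  constructor
  · intro h
    obtain ⟨r, e, hr, hdeg, hmul⟩ := exists_isHomogeneous_mul_eq
      (Polynomial.isHomogeneous_homogenize p) ((Polynomial.homogenize_eq_zero_iff hn).not.mpr hp) h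
    obtain ⟨q, hq, rfl⟩ := exists_homogenize_eq hr
    have hqp : q = p := by
      simpa [hq, hn] using congrArg (MvPolynomial.aeval ![(Polynomial.X : Polynomial R), 1]) hmul
    rw [MvPolynomial.totalDegree_X_pow] at hdeg
    rw [← hqp]
    omega
  · intro h
    have hmul := Polynomial.homogenize_mul p 1 (Nat.le_sub_of_add_le h) (n := m) (by simp)
    rw [mul_one, Nat.sub_add_cancel (by omega), Polynomial.homogenize_one] at hmul
    exact Dvd.intro_left _ hmul.symm

theorem squarefree_of_squarefree_homogenize {p : Polynomial R} (hp : p ≠ 0)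
    (hn : p.natDegree ≤ n) (h : Squarefree (p.homogenize n)) : Squarefree p := by
  rintro d ⟨c, rfl⟩
  have hd : d ≠ 0 := by aesop
  have hc : c ≠ 0 := by aesop
  rw [Polynomial.natDegree_mul (mul_ne_zero hd hd) hc, Polynomial.natDegree_mul hd hd] at hn
  have hmul := Polynomial.homogenize_mul (d * d) c (m := d.natDegree + d.natDegree)
    (n := n - (d.natDegree + d.natDegree)) Polynomial.natDegree_mul_le (by omega)
  rw [Nat.add_sub_cancel' (by omega), Polynomial.homogenize_mul d d le_rfl le_rfl] at hmul
  have hunit := h _ (Dvd.intro _ hmul.symm)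
  simpa using hunit.map (MvPolynomial.aeval ![(Polynomial.X : Polynomial R), 1])

theorem squarefree_homogenize_iff {p : Polynomial k} (hp : p ≠ 0) (hn : p.natDegree ≤ n) :
    Squarefree (p.homogenize n) ↔ Squarefree p ∧ n ≤ p.natDegree + 1 := by
  have hh : p.homogenize n ≠ 0 := (Polynomial.homogenize_eq_zero_iff hn).not.mpr hp
  constructor
  · refine fun h => ⟨squarefree_of_squarefree_homogenize hp hn h, ?_⟩
    by_contra! hlt
    have hX : IsUnit (MvPolynomial.X 1 : MvPolynomial (Fin 2) k) :=
      h _ (by rw [← sq]; exact (X_one_pow_dvd_homogenize_iff hp hn).mpr (by omega))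
    exact MvPolynomial.X_prime.not_isUnit hX
  · rintro ⟨hsq, hdeg⟩ d hd
    obtain ⟨e, he⟩ : ∃ e, d.IsHomogeneous e := ⟨_, isHomogeneous_of_dvd
      (Polynomial.isHomogeneous_homogenize p) hh (dvd_of_mul_left_dvd hd)⟩
    obtain ⟨q, hq, rfl⟩ := exists_homogenize_eq he
    have hqp : q * q ∣ p := by
      simpa [hn, hq] using map_dvd (MvPolynomial.aeval ![(Polynomial.X : Polynomial k), 1]) hd
    obtain ⟨c, hc, rfl⟩ := Polynomial.isUnit_iff.mp (hsq q hqp)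
    rw [Polynomial.homogenize_C] at hd ⊢
    have hX : MvPolynomial.X 1 ^ (e + e) ∣ p.homogenize n := by
      rw [pow_add]
      exact (mul_dvd_mul (dvd_mul_left _ _) (dvd_mul_left _ _)).trans hd
    have he0 : e = 0 := by
      have := (X_one_pow_dvd_homogenize_iff hp hn).mp hX
      omega
    rw [he0, pow_zero, mul_one]
    exact hc.map MvPolynomial.C

theorem squarefree_map_iff [PerfectField k] {K : Type*} [Field K] [PerfectField K] (φ : k →+* K)
    {p : Polynomial k} : Squarefree (p.map φ) ↔ Squarefree p := by
  rw [← PerfectField.separable_iff_squarefree, ← PerfectField.separable_iff_squarefree,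
    Polynomial.separable_map]

theorem squarefree_map_toPoly_iff [PerfectField k] {K : Type*} [Field K] [PerfectField K]
    (φ : k →+* K) {v : Fin (n + 1) → k} (hv : v ≠ 0) :
    Squarefree (MvPolynomial.map φ (toPoly v)) ↔ Squarefree (toPoly v) := by
  have hn := natDegree_dehomogenize_le v
  have hp : dehomogenize v ≠ 0 := fun h => hv <| by
    rw [← toPoly_eq_zero_iff, toPoly_apply, h, Polynomial.homogenize_zero]
  rw [toPoly_apply, ← Polynomial.homogenize_map, squarefree_homogenize_iff hp hn,
    squarefree_homogenize_iff ((Polynomial.map_ne_zero_iff φ.injective).mpr hp)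
      (Polynomial.natDegree_map_le.trans hn),
    squarefree_map_iff, Polynomial.natDegree_map]

theorem exists_linear_dvd_homogenize [IsAlgClosed k] {p : Polynomial k} (hn0 : n ≠ 0)
    (hn : p.natDegree ≤ n) :
    ∃ l : Polynomial k, l ≠ 0 ∧ l.natDegree ≤ 1 ∧ l.homogenize 1 ∣ p.homogenize n := by
  obtain ⟨n, rfl⟩ := Nat.exists_eq_add_one_of_ne_zero hn0
  suffices ∃ l q : Polynomial k, l ≠ 0 ∧ l.natDegree ≤ 1 ∧ q.natDegree ≤ n ∧ q * l = p by
    obtain ⟨l, q, hl, hl1, hq, rfl⟩ := this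
    exact ⟨l, hl, hl1, Dvd.intro_left _ (Polynomial.homogenize_mul q l hq hl1).symm⟩
  by_cases hp : p.natDegree ≤ n
  · exact ⟨1, p, one_ne_zero, by simp, hp, mul_one p⟩
  · have hdeg : p.degree ≠ 0 := fun h => hp (Polynomial.natDegree_le_of_degree_le (by simp [h]))
    obtain ⟨t, ht⟩ := IsAlgClosed.exists_root p hdeg
    refine ⟨.X - .C t, p /ₘ (.X - .C t), Polynomial.X_sub_C_ne_zero t,
      Polynomial.natDegree_X_sub_C_le t, ?_, ?_⟩
    · rw [Polynomial.natDegree_divByMonic p (Polynomial.monic_X_sub_C t),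
        Polynomial.natDegree_X_sub_C]
      omega
    · rw [mul_comm, Polynomial.mul_divByMonic_eq_iff_isRoot.mpr ht]

theorem exists_linear_dvd [IsAlgClosed k] {r : MvPolynomial (Fin 2) k} (hr : r.IsHomogeneous n)
    (hn : n ≠ 0) : ∃ l : Fin 2 → k, l ≠ 0 ∧ toPoly (n := 1) l ∣ r := by
  obtain ⟨p, hp, rfl⟩ := exists_homogenize_eq hr
  obtain ⟨q, hq0, hq, hdvd⟩ := exists_linear_dvd_homogenize hn hp
  obtain ⟨l, hl⟩ := exists_toPoly_eq (Polynomial.isHomogeneous_homogenize (n := 1) q)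
  rw [← hl] at hdvd
  refine ⟨l, ?_, hdvd⟩
  rwa [ne_eq, ← toPoly_eq_zero_iff, hl, Polynomial.homogenize_eq_zero_iff hq]

theorem isSingularQuintic_iff_not_squarefree [PerfectField k] {v : Fin 6 → k} (hv : v ≠ 0) :
    IsSingularQuintic v ↔ ¬ Squarefree (toPoly v) := by
  set φ := algebraMap k (AlgebraicClosure k)
  rw [IsSingularQuintic, ← squarefree_map_toPoly_iff φ hv, map_toPoly]
  simp only [ne_eq, hv, not_false_eq_true, true_and]
  have hv' : toPoly (fun i => φ (v i)) ≠ 0 := by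
    rw [← map_toPoly]
    exact (map_ne_zero_iff _ (MvPolynomial.map_injective φ φ.injective)).mpr
      (toPoly_eq_zero_iff.not.mpr hv)
  constructor
  · rintro ⟨l, c, hl, h⟩ hsq
    have hdvd : toPoly (n := 1) l * toPoly (n := 1) l ∣ toPoly fun i => φ (v i) := by
      rw [h, toPoly_formMul (a := 2) (b := 3), toPoly_formMul (a := 1) (b := 1)]
      exact dvd_mul_right _ _
    have := (isUnit_iff_eq_zero_of_isHomogeneous (isHomogeneous_toPoly (n := 1) l)
      (toPoly_eq_zero_iff.not.mpr hl)).mp (hsq _ hdvd)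
    omega
  · intro h
    obtain ⟨d, hd, hu⟩ : ∃ d, d * d ∣ toPoly (fun i => φ (v i)) ∧ ¬ IsUnit d := by
      simpa only [Squarefree, not_forall, exists_prop] using h
    have hd' := isHomogeneous_of_dvd (isHomogeneous_toPoly _) hv' (dvd_of_mul_left_dvd hd)
    rw [isUnit_iff_eq_zero_of_isHomogeneous hd' (by rintro rfl; simp_all)] at hu
    obtain ⟨l, hl, hld⟩ := exists_linear_dvd hd' hu
    have hlv := (mul_dvd_mul hld hld).trans hd
    rw [← toPoly_formMul, toPoly_dvd_toPoly_iff (a := 2) (b := 3)] at hlv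
    obtain ⟨c, hc⟩ := hlv
    exact ⟨l, c, hl, hc.symm⟩

end Squarefree

section ProjectiveClasses

open scoped LinearAlgebra.Projectivization

variable {k : Type*} [Field k] {n : ℕ}

/-- A polynomial representing a projective class of binary forms; it is determined by the class
up to a nonzero constant, so its divisors and its multiples are. -/
noncomputable def repPoly (k : Type*) [Field k] (n : ℕ) (x : ℙ k (Fin (n + 1) → k)) :
    MvPolynomial (Fin 2) k := toPoly x.rep

theorem isHomogeneous_repPoly (x : ℙ k (Fin (n + 1) → k)) : (repPoly k n x).IsHomogeneous n :=
  isHomogeneous_toPoly _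

theorem repPoly_ne_zero (x : ℙ k (Fin (n + 1) → k)) : repPoly k n x ≠ 0 :=
  toPoly_eq_zero_iff.not.mpr x.rep_nonzero

theorem associated_repPoly_mk {f : Fin (n + 1) → k} (hf : f ≠ 0) :
    Associated (repPoly k n (Projectivization.mk k f hf)) (toPoly f) := by
  obtain ⟨a, ha⟩ := Projectivization.exists_smul_eq_mk_rep k f hf
  rw [repPoly, ← ha, Units.smul_def, map_smul, MvPolynomial.smul_eq_C_mul]
  exact associated_unit_mul_left _ _ (a.isUnit.map MvPolynomial.C)

theorem exists_associated_repPoly {r : MvPolynomial (Fin 2) k} (hr : r.IsHomogeneous n)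
    (hr0 : r ≠ 0) : ∃ x : ℙ k (Fin (n + 1) → k), Associated (repPoly k n x) r := by
  obtain ⟨f, rfl⟩ := exists_toPoly_eq hr
  exact ⟨_, associated_repPoly_mk (toPoly_eq_zero_iff.not.mp hr0)⟩

theorem eq_of_repPoly_dvd {x y : ℙ k (Fin (n + 1) → k)} (h : repPoly k n x ∣ repPoly k n y) :
    x = y := by
  obtain ⟨t, e, ht, hdeg, hmul⟩ :=
    exists_isHomogeneous_mul_eq (isHomogeneous_repPoly y) (repPoly_ne_zero y) h
  rw [(isHomogeneous_repPoly x).totalDegree (repPoly_ne_zero x), add_eq_left] at hdeg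
  rw [hdeg, ← MvPolynomial.totalDegree_zero_iff_isHomogeneous,
    MvPolynomial.totalDegree_eq_zero_iff_eq_C] at ht
  rw [← x.mk_rep, ← y.mk_rep, eq_comm, Projectivization.mk_eq_mk_iff']
  refine ⟨t.coeff 0, toPoly_injective ?_⟩
  rw [map_smul, MvPolynomial.smul_eq_C_mul, ← ht, mul_comm]
  exact hmul

/-- The product of representatives of two projective classes of binary forms. -/
noncomputable def repPolyMul (k : Type*) [Field k] (a b : ℕ)
    (z : ℙ k (Fin (a + 1) → k) × ℙ k (Fin (b + 1) → k)) : MvPolynomial (Fin 2) k :=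
  repPoly k a z.1 * repPoly k b z.2

theorem isHomogeneous_repPolyMul {a b : ℕ} (z : ℙ k (Fin (a + 1) → k) × ℙ k (Fin (b + 1) → k)) :
    (repPolyMul k a b z).IsHomogeneous (a + b) :=
  (isHomogeneous_repPoly _).mul (isHomogeneous_repPoly _)

/-- The number of members of the family `r` that divide `s`. -/
noncomputable def divisorCount {X M : Type*} [Monoid M] (r : X → M) (s : M) : ℕ :=
  Nat.card {x // r x ∣ s}

theorem divisorCount_zero {X M : Type*} [MonoidWithZero M] (r : X → M) :
    divisorCount r 0 = Nat.card X :=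
  Nat.card_congr (Equiv.subtypeUnivEquiv fun x => dvd_zero (r x))

theorem divisorCount_eq_zero {X σ R : Type*} [CommRing R] [IsDomain R]
    {r : X → MvPolynomial σ R} {s : MvPolynomial σ R} {m : ℕ} (hr : ∀ x, (r x).IsHomogeneous n)
    (hs : s.IsHomogeneous m) (hs0 : s ≠ 0) (h : m < n) : divisorCount r s = 0 := by
  have : IsEmpty {x // r x ∣ s} := by
    refine ⟨fun ⟨x, hx⟩ => h.not_ge ?_⟩
    rw [← (hr x).totalDegree (ne_zero_of_dvd_ne_zero hs0 hx), ← hs.totalDegree hs0]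
    exact MvPolynomial.totalDegree_le_of_dvd_of_isDomain hx hs0
  exact Nat.card_of_isEmpty

theorem existsUnique_repPoly_dvd {s : MvPolynomial (Fin 2) k} (hs : s.IsHomogeneous n)
    (hs0 : s ≠ 0) : ∃! x : ℙ k (Fin (n + 1) → k), repPoly k n x ∣ s := by
  obtain ⟨y, hy⟩ := exists_associated_repPoly hs hs0
  exact ⟨y, hy.dvd, fun x hx => eq_of_repPoly_dvd (hx.trans hy.symm.dvd)⟩

theorem divisorCount_repPoly_self {s : MvPolynomial (Fin 2) k} (hs : s.IsHomogeneous n)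
    (hs0 : s ≠ 0) : divisorCount (repPoly k n) s = 1 := by
  obtain ⟨x, hx, hunique⟩ := existsUnique_repPoly_dvd hs hs0
  exact Nat.card_eq_one_iff_exists.mpr ⟨⟨x, hx⟩, fun y => Subtype.ext (hunique _ y.2)⟩

-- If `s` has degree `a + b`, a divisor of degree `a` determines its cofactor of degree `b`.
theorem divisorCount_repPoly_mul {a b : ℕ} {s : MvPolynomial (Fin 2) k}
    (hs : s.IsHomogeneous (a + b)) (hs0 : s ≠ 0) :
    divisorCount (repPolyMul k a b) s = divisorCount (repPoly k a) s := by
  have cofactor (x : ℙ k (Fin (a + 1) → k)) (hx : repPoly k a x ∣ s) :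
      ∃! y : ℙ k (Fin (b + 1) → k), repPoly k a x * repPoly k b y ∣ s := by
    obtain ⟨t, e, ht, hdeg, rfl⟩ := exists_isHomogeneous_mul_eq hs hs0 hx
    rw [(isHomogeneous_repPoly x).totalDegree (repPoly_ne_zero x), add_right_inj] at hdeg
    simpa only [mul_dvd_mul_iff_left (repPoly_ne_zero x)] using
      existsUnique_repPoly_dvd (hdeg ▸ ht) (right_ne_zero_of_mul hs0)
  refine Nat.card_congr (Equiv.ofBijective
    (fun z => ⟨z.1.1, dvd_of_mul_right_dvd z.2⟩) ⟨?_, ?_⟩)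
  · rintro ⟨⟨x, y⟩, hy⟩ ⟨⟨x', y'⟩, hy'⟩ h
    obtain rfl : x = x' := congrArg Subtype.val h
    obtain rfl : y = y' := (cofactor x (dvd_of_mul_right_dvd hy)).unique hy hy'
    rfl
  · rintro ⟨x, hx⟩
    obtain ⟨y, hy, -⟩ := cofactor x hx
    exact ⟨⟨(x, y), hy⟩, rfl⟩

theorem divisorCount_add_of_totalDegree_le_two {s : MvPolynomial (Fin 2) k} (hs0 : s ≠ 0)
    (hs : s.IsHomogeneous n) (hn : n ≤ 2) :
    divisorCount (repPoly k 1) s + divisorCount (repPoly k 2) s =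
      divisorCount (repPolyMul k 1 1) s + if n = 0 then 0 else 1 := by
  obtain rfl | rfl | rfl : n = 0 ∨ n = 1 ∨ n = 2 := by omega
  · rw [divisorCount_eq_zero isHomogeneous_repPoly hs hs0 one_pos,
      divisorCount_eq_zero isHomogeneous_repPoly hs hs0 two_pos,
      divisorCount_eq_zero isHomogeneous_repPolyMul hs hs0 two_pos, if_pos rfl]
  · rw [divisorCount_repPoly_self hs hs0,
      divisorCount_eq_zero isHomogeneous_repPoly hs hs0 one_lt_two,
      divisorCount_eq_zero isHomogeneous_repPolyMul hs hs0 one_lt_two, if_neg one_ne_zero]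
  · rw [divisorCount_repPoly_self hs hs0, divisorCount_repPoly_mul (a := 1) (b := 1) hs hs0,
      if_neg two_ne_zero]

theorem divisorCount_sq_add_of_ne_zero {v : MvPolynomial (Fin 2) k} (hv0 : v ≠ 0)
    (hv : v.IsHomogeneous n) (hn : n ≤ 5) [Decidable (Squarefree v)] :
    divisorCount (repPoly k 1 ^ 2) v + divisorCount (repPoly k 2 ^ 2) v =
      divisorCount (repPolyMul k 1 1 ^ 2) v + if Squarefree v then 0 else 1 := by
  obtain ⟨s, hs⟩ := exists_forall_sq_dvd_iff_dvd hv0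
  have hsv : s ^ 2 ∣ v := (hs s).mpr dvd_rfl
  have hs0 : s ≠ 0 := ne_zero_of_dvd_ne_zero hv0 ((dvd_pow_self s two_ne_zero).trans hsv)
  have hsh := isHomogeneous_of_dvd hv hv0 ((dvd_pow_self s two_ne_zero).trans hsv)
  have hdeg : s.totalDegree ≤ 2 := by
    have := MvPolynomial.totalDegree_le_of_dvd_of_isDomain hsv hv0
    rw [(hsh.pow 2).totalDegree (pow_ne_zero 2 hs0), hv.totalDegree hv0] at this
    omega
  have hsq : Squarefree v ↔ s.totalDegree = 0 := by
    rw [← isUnit_iff_eq_zero_of_isHomogeneous hsh hs0]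
    simp only [Squarefree, ← sq, hs]
    exact ⟨fun h => h s dvd_rfl, fun h d hd => isUnit_of_dvd_unit hd h⟩
  simp only [hsq]
  convert divisorCount_add_of_totalDegree_le_two hs0 hsh hdeg using 2 <;>
    simp only [divisorCount, Pi.pow_apply, hs]

theorem divisorCount_sq_add [Finite k] (v : Fin 6 → k) [Decidable (v = 0 ∨ IsSingularQuintic v)] :
    divisorCount (repPoly k 1 ^ 2) (toPoly v) + divisorCount (repPoly k 2 ^ 2) (toPoly v) =
      divisorCount (repPolyMul k 1 1 ^ 2) (toPoly v) +
        if v = 0 ∨ IsSingularQuintic v then 1 else 0 := by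
  rcases eq_or_ne v 0 with rfl | hv
  · have card_line := Projectivization.card_of_finrank_two k (Fin 2 → k) (Module.finrank_fin_fun k)
    have card_plane := Projectivization.card_of_finrank k (Fin 3 → k) (Module.finrank_fin_fun k)
    simp only [map_zero, divisorCount_zero, Nat.card_prod, card_line, card_plane, sum_range_succ,
      range_zero, sum_empty, true_or, if_true]
    ring
  · classical
    rw [divisorCount_sq_add_of_ne_zero (toPoly_eq_zero_iff.not.mpr hv) (isHomogeneous_toPoly v)
      le_rfl]
    simp only [hv, false_or, isSingularQuintic_iff_not_squarefree hv, ite_not]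

end ProjectiveClasses
section Apolarity

variable {R : Type*} [CommRing R] {n : ℕ}

/-- Multiplication by a fixed form, as a linear map. -/
def mulForm {a : ℕ} (b : ℕ) (f : Fin (a + 1) → R) :
    (Fin (b + 1) → R) →ₗ[R] (Fin (a + b + 1) → R) where
  toFun := formMul f
  map_add' g h := by
    ext i
    simp only [formMul, Pi.add_apply, ← sum_add_distrib]
    exact sum_congr rfl fun q _ => by split_ifs <;> ring
  map_smul' c g := by
    ext i
    simp only [formMul, Pi.smul_apply, smul_eq_mul, mul_sum, RingHom.id_apply]
    exact sum_congr rfl fun q _ => by split_ifs <;> ring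

theorem formMul_right_injective [IsDomain R] {a b : ℕ} {f : Fin (a + 1) → R} (hf : f ≠ 0) :
    Function.Injective (formMul (b := b) f) := fun g h hgh =>
  toPoly_injective <| mul_left_cancel₀ (toPoly_eq_zero_iff.not.mpr hf) <| by
    rw [← toPoly_formMul, ← toPoly_formMul, hgh]

/-- The polynomial `r` is apolar to `w`: every form of degree `n` that is a multiple of `r` pairs
to zero with `w`. -/
def IsApolar (w : Fin (n + 1) → R) (r : MvPolynomial (Fin 2) R) : Prop :=
  ∀ v, r ∣ toPoly v → pair w v = 0

theorem isApolar_congr {w : Fin (n + 1) → R} {r s : MvPolynomial (Fin 2) R}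
    (h : Associated r s) : IsApolar w r ↔ IsApolar w s := by
  simp only [IsApolar, h.dvd_iff_dvd_left]

theorem isApolar_toPoly_iff [IsDomain R] {a b : ℕ} {w : Fin (a + b + 1) → R} {f : Fin (a + 1) → R} :
    IsApolar w (toPoly f) ↔ ∀ h : Fin (b + 1) → R, pair w (formMul f h) = 0 := by
  simp only [IsApolar, toPoly_dvd_toPoly_iff, forall_exists_index, forall_apply_eq_imp_iff]

open scoped LinearAlgebra.Projectivization

variable {k : Type*} [Field k]

theorem isApolar_repPoly_sq_iff {a b : ℕ} {w : Fin (a + a + b + 1) → k}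
    {x : ℙ k (Fin (a + 1) → k)} :
    IsApolar w (repPoly k a x ^ 2) ↔
      ∃ (f : Fin (a + 1) → k) (hf : f ≠ 0), Projectivization.mk k f hf = x ∧
        ∀ h : Fin (b + 1) → k, pair w (formMul (formMul f f) h) = 0 := by
  simp only [← isApolar_toPoly_iff, toPoly_formMul, ← sq]
  constructor
  · exact fun h => ⟨x.rep, x.rep_nonzero, x.mk_rep, h⟩
  · rintro ⟨f, hf, rfl, h⟩
    exact (isApolar_congr ((associated_repPoly_mk hf).pow_pow)).mpr h

theorem isApolar_repPolyMul_sq_iff {a b c : ℕ} {w : Fin (a + a + (b + b) + c + 1) → k}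
    {z : ℙ k (Fin (a + 1) → k) × ℙ k (Fin (b + 1) → k)} :
    IsApolar w (repPolyMul k a b z ^ 2) ↔
      ∃ (f : Fin (a + 1) → k) (g : Fin (b + 1) → k) (hf : f ≠ 0) (hg : g ≠ 0),
        Projectivization.mk k f hf = z.1 ∧ Projectivization.mk k g hg = z.2 ∧
        ∀ h : Fin (c + 1) → k, pair w (formMul (formMul (formMul f f) (formMul g g)) h) = 0 := by
  simp only [← isApolar_toPoly_iff, toPoly_formMul, ← sq, ← mul_pow]
  constructor
  · exact fun h => ⟨_, _, z.1.rep_nonzero, z.2.rep_nonzero, z.1.mk_rep, z.2.mk_rep, h⟩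
  · obtain ⟨x, y⟩ := z
    rintro ⟨f, g, hf, hg, rfl, rfl, h⟩
    exact (isApolar_congr
      (((associated_repPoly_mk hf).mul_mul (associated_repPoly_mk hg)).pow_pow)).mpr h

end Apolarity

section CharacterSums

variable {k : Type*} [Field k] {R : Type*} [CommRing R] [IsDomain R] {ψ : AddChar k R}

open scoped Classical in
theorem sum_addChar_linearMap {V : Type*} [AddCommGroup V] [Module k V] [Fintype V] (hψ : ψ ≠ 0)
    (L : V →ₗ[k] k) : ∑ v, ψ (L v) = if L = 0 then (Fintype.card V : R) else 0 := by
  have htrivial : ψ.compAddMonoidHom L.toAddMonoidHom = 0 ↔ L = 0 := by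
    refine ⟨fun h => ?_, by rintro rfl; ext; simp⟩
    contrapose! hψ
    ext t
    obtain ⟨v, rfl⟩ := L.surjective hψ t
    exact DFunLike.congr_fun h v
  rw [← if_congr htrivial rfl rfl]
  exact AddChar.sum_eq_ite (ψ.compAddMonoidHom L.toAddMonoidHom)

variable [Fintype k]

open scoped Classical in
theorem sum_addChar_pair_of_dvd (hψ : ψ ≠ 0) {a b : ℕ} (w : Fin (a + b + 1) → k)
    {r : MvPolynomial (Fin 2) k} (hr : r.IsHomogeneous a) (hr0 : r ≠ 0) :
    ∑ v : Fin (a + b + 1) → k, (if r ∣ toPoly v then ψ (pair w v) else 0) =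
      if IsApolar w r then (Fintype.card k : R) ^ (b + 1) else 0 := by
  obtain ⟨f, rfl⟩ := exists_toPoly_eq hr
  set L : (Fin (b + 1) → k) →ₗ[k] k := dotProductBilin k k w ∘ₗ mulForm b f
  have hL : IsApolar w (toPoly f) ↔ L = 0 := by
    rw [isApolar_toPoly_iff, LinearMap.ext_iff]
    rfl
  calc ∑ v, (if toPoly f ∣ toPoly v then ψ (pair w v) else 0)
      = ∑ h : Fin (b + 1) → k, ψ (L h) := by
        refine (Fintype.sum_of_injective (formMul f)
          (formMul_right_injective (toPoly_eq_zero_iff.not.mp hr0)) _ _ ?_ ?_).symm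
        · intro v hv
          rw [if_neg (by rwa [toPoly_dvd_toPoly_iff])]
        · intro h
          rw [if_pos (toPoly_dvd_toPoly_iff.mpr ⟨h, rfl⟩)]
          rfl
    _ = if IsApolar w (toPoly f) then (Fintype.card k : R) ^ (b + 1) else 0 := by
        rw [sum_addChar_linearMap hψ L]
        simp only [hL, Fintype.card_fun, Fintype.card_fin, Nat.cast_pow]

theorem sum_addChar_pair_mul_divisorCount (hψ : ψ ≠ 0) {a b : ℕ} (w : Fin (a + b + 1) → k)
    {X : Type*} [Finite X] {r : X → MvPolynomial (Fin 2) k} (hr : ∀ x, (r x).IsHomogeneous a)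
    (hr0 : ∀ x, r x ≠ 0) :
    ∑ v : Fin (a + b + 1) → k, ψ (pair w v) * divisorCount r (toPoly v) =
      (Fintype.card k : R) ^ (b + 1) * Nat.card {x // IsApolar w (r x)} := by
  classical
  have := Fintype.ofFinite X
  have card_eq_sum (P : X → Prop) : (Nat.card {x // P x} : R) = ∑ x, if P x then 1 else 0 := by
    rw [Nat.card_eq_fintype_card, Fintype.card_subtype, sum_boole]
  simp only [divisorCount, card_eq_sum, mul_sum, mul_ite, mul_one, mul_zero]
  rw [sum_comm]
  exact sum_congr rfl fun x _ => sum_addChar_pair_of_dvd hψ w (hr x) (hr0 x)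

theorem sum_addChar_pair_singular [∀ v : Fin 6 → k, Decidable (v = 0 ∨ IsSingularQuintic v)]
    (hψ : ψ ≠ 0) (w : Fin 6 → k) :
    ∑ v, (if v = 0 ∨ IsSingularQuintic v then ψ (pair w v) else 0) =
      (Fintype.card k : R) ^ 4 * Nat.card {x // IsApolar w (repPoly k 1 x ^ 2)} +
      (Fintype.card k : R) ^ 2 * (Nat.card {x // IsApolar w (repPoly k 2 x ^ 2)} -
        Nat.card {z // IsApolar w (repPolyMul k 1 1 z ^ 2)}) := by
  have hsummand (v : Fin 6 → k) : (if v = 0 ∨ IsSingularQuintic v then ψ (pair w v) else 0) =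
      ψ (pair w v) * divisorCount (repPoly k 1 ^ 2) (toPoly v) +
      (ψ (pair w v) * divisorCount (repPoly k 2 ^ 2) (toPoly v) -
        ψ (pair w v) * divisorCount (repPolyMul k 1 1 ^ 2) (toPoly v)) := by
    have h := congrArg (Nat.cast (R := R)) (divisorCount_sq_add v)
    push_cast at h
    rw [← mul_boole]
    linear_combination -ψ (pair w v) * h
  have hlinear := sum_addChar_pair_mul_divisorCount hψ (a := 2) (b := 3) w
    (r := repPoly k 1 ^ 2) (fun x => (isHomogeneous_repPoly x).pow 2)
    fun x => pow_ne_zero 2 (repPoly_ne_zero x)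
  have hquadratic := sum_addChar_pair_mul_divisorCount hψ (a := 4) (b := 1) w
    (r := repPoly k 2 ^ 2) (fun x => (isHomogeneous_repPoly x).pow 2)
    fun x => pow_ne_zero 2 (repPoly_ne_zero x)
  have hpairs := sum_addChar_pair_mul_divisorCount hψ (a := 4) (b := 1) w
    (r := repPolyMul k 1 1 ^ 2) (fun z => (isHomogeneous_repPolyMul z).pow 2)
    fun z => pow_ne_zero 2 (mul_ne_zero (repPoly_ne_zero z.1) (repPoly_ne_zero z.2))
  simp only [hsummand, sum_add_distrib, sum_sub_distrib]
  rw [hlinear, hquadratic, hpairs, ← mul_sub]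
  rfl

end CharacterSums

theorem expSum_eq_sum_stdAddChar (p : ℕ) [Fact p.Prime] (w : Fin 6 → ZMod p) :
    expSum p w = ∑ v, open scoped Classical in
      if v = 0 ∨ IsSingularQuintic v then ZMod.stdAddChar (pair w v) else 0 := by
  simp only [expSum, ZMod.stdAddChar_apply, ZMod.toCircle_apply]

theorem stdAddChar_ne_zero (N : ℕ) [NeZero N] [Nontrivial (ZMod N)] :
    ZMod.stdAddChar (N := N) ≠ 0 := fun h => one_ne_zero (α := ZMod N) <|
  ZMod.injective_stdAddChar <| by simp only [h, AddChar.zero_apply]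

end BinaryForm

theorem stmt12_general {k R : Type*} [Field k] [Fintype k] [CommRing R] [IsDomain R]
    [∀ v : Fin 6 → k, Decidable (v = 0 ∨ IsSingularQuintic v)]
    {ψ : AddChar k R} (hψ : ψ ≠ 0) (w : Fin 6 → k) :
    ∑ v : Fin 6 → k, (if v = 0 ∨ IsSingularQuintic v then ψ (pair w v) else 0) =
      (Fintype.card k : R) ^ 4 * (Nat.card {x : Projectivization k (Fin 2 → k) //
          ∃ (l : Fin 2 → k) (hl : l ≠ 0), Projectivization.mk k l hl = x ∧
            ∀ h : Fin 4 → k, pair w (formMul (formMul l l) h) = 0} : R) +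
      (Fintype.card k : R) ^ 2 *
        ((Nat.card {x : Projectivization k (Fin 3 → k) //
            ∃ (q : Fin 3 → k) (hq : q ≠ 0), Projectivization.mk k q hq = x ∧
              ∀ h : Fin 2 → k, pair w (formMul (formMul q q) h) = 0} : R) -
         (Nat.card {x : Projectivization k (Fin 2 → k) × Projectivization k (Fin 2 → k) //
            ∃ (l1 l2 : Fin 2 → k) (h1 : l1 ≠ 0) (h2 : l2 ≠ 0),
              Projectivization.mk k l1 h1 = x.1 ∧ Projectivization.mk k l2 h2 = x.2 ∧
              ∀ h : Fin 2 → k,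
                pair w (formMul (formMul (formMul l1 l1) (formMul l2 l2)) h) = 0} : R)) := by
  simp only [← BinaryForm.isApolar_repPoly_sq_iff (a := 1) (b := 3),
    ← BinaryForm.isApolar_repPoly_sq_iff (a := 2) (b := 1),
    ← BinaryForm.isApolar_repPolyMul_sq_iff (a := 1) (b := 1) (c := 1)]
  exact BinaryForm.sum_addChar_pair_singular hψ w

/-- `S(w) = p⁴·N₁ + p²·(N₂ - N₃)`, where `N₁`, `N₂`, `N₃` count projective classes of
linear forms `ℓ` with `ℓ²` apolar to `w`, quadratic forms `q` with `q²` apolar to `w`,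
and pairs of linear forms `(ℓ₁,ℓ₂)` with `ℓ₁²ℓ₂²` apolar to `w`, respectively. -/
theorem stmt12 (p : ℕ) [Fact p.Prime] (w : Fin 6 → ZMod p) :
    expSum p w =
      (p : ℂ) ^ 4 * (Nat.card {x : Projectivization (ZMod p) (Fin 2 → ZMod p) //
          ∃ (l : Fin 2 → ZMod p) (hl : l ≠ 0), Projectivization.mk (ZMod p) l hl = x ∧
            ∀ h : Fin 4 → ZMod p, pair w (formMul (formMul l l) h) = 0} : ℂ) +
      (p : ℂ) ^ 2 *
        ((Nat.card {x : Projectivization (ZMod p) (Fin 3 → ZMod p) //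
            ∃ (q : Fin 3 → ZMod p) (hq : q ≠ 0), Projectivization.mk (ZMod p) q hq = x ∧
              ∀ h : Fin 2 → ZMod p, pair w (formMul (formMul q q) h) = 0} : ℂ) -
         (Nat.card {x : Projectivization (ZMod p) (Fin 2 → ZMod p) ×
              Projectivization (ZMod p) (Fin 2 → ZMod p) //
            ∃ (l1 l2 : Fin 2 → ZMod p) (h1 : l1 ≠ 0) (h2 : l2 ≠ 0),
              Projectivization.mk (ZMod p) l1 h1 = x.1 ∧
              Projectivization.mk (ZMod p) l2 h2 = x.2 ∧
              ∀ h : Fin 2 → ZMod p,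
                pair w (formMul (formMul (formMul l1 l1) (formMul l2 l2)) h) = 0} : ℂ)) := by
  classical
  rw [BinaryForm.expSum_eq_sum_stdAddChar, stmt12_general (BinaryForm.stdAddChar_ne_zero p) w,
    ZMod.card]
end
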